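/- arXiv:2511.18167 — 5 statements merged into one kernel-verified Lean document; each statement's English description precedes it below -/
import Mathlib

section
/- Let f : ℝ^d → ℝ be convex, differentiable, (μ,τ)-restricted strongly convex and (L,τ)-restricted smooth. Let s* ≤ s be positive integers with μ̄ = μ − 3τs > 0. Let Φ_s be a sparsifying operator at level s and let η ∈ [0, 1/4] be an upper bound on its relative concavity at sparsity level s*. Let θ̂ ∈ ℝ^d satisfy ‖θ̂‖₀ ≤ s*, f̂ = f(θ̂). Suppose θ_t ∈ ℝ^d satisfies ‖θ_t‖₀ ≤ s and ‖θ_t − θ̂‖² < 36‖Φ^HT_s(∇f(θ̂))‖²/μ̄², and define γ_t = max{f(θ_t) − f̂, 0}/(5‖Φ^HT_s(∇f(θ_t))‖²) (with the convention γ_t = 0 if the denominator vanishes) and θ_{t+1} = Φ_s(θ_t − γ_t ∇f(θ_t)). Then ‖θ_{t+1} − θ̂‖² ≤ (1 + 4η)‖θ_t − θ̂‖². -/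
open scoped RealInnerProductSpace BigOperators

noncomputable section

/-- The number of nonzero entries of a vector (the "ℓ0 norm"). -/
def spar {d : ℕ} (θ : EuclideanSpace ℝ (Fin d)) : ℕ :=
  (Finset.univ.filter fun i => θ i ≠ 0).card

/-- The ℓ1 norm of a vector. -/
def normL1 {d : ℕ} (θ : EuclideanSpace ℝ (Fin d)) : ℝ := ∑ i, |θ i|

/-- `Φ` is a hard thresholding operator at level `k`: it keeps the `k` entries of largest
absolute value (with some fixed tie-breaking rule) and sets all other entries to zero. -/
def IsHT (d k : ℕ) (Φ : EuclideanSpace ℝ (Fin d) → EuclideanSpace ℝ (Fin d)) : Prop :=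
  ∀ θ : EuclideanSpace ℝ (Fin d), ∃ S : Finset (Fin d), S.card = min k d ∧
    (∀ i ∈ S, Φ θ i = θ i) ∧ (∀ i, i ∉ S → Φ θ i = 0) ∧
    (∀ i ∈ S, ∀ j, j ∉ S → |θ j| ≤ |θ i|)

/-- `Φ` is a reciprocal thresholding operator at level `s`. -/
def IsRT (d s : ℕ) (Φ : EuclideanSpace ℝ (Fin d) → EuclideanSpace ℝ (Fin d)) : Prop :=
  ∀ θ : EuclideanSpace ℝ (Fin d), ∃ S : Finset (Fin d), S.card = min s d ∧
    (∀ i ∈ S, ∀ j, j ∉ S → |θ j| ≤ |θ i|) ∧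
    ∃ τhat : ℝ, (∀ j, j ∉ S → |θ j| ≤ τhat) ∧ (∃ j, j ∉ S ∧ |θ j| = τhat) ∧
      (∀ i ∈ S, Φ θ i = Real.sign (θ i) * (|θ i| + Real.sqrt ((θ i) ^ 2 - τhat ^ 2)) / 2) ∧
      (∀ i, i ∉ S → Φ θ i = 0)

/-- Restricted strong convexity. -/
def RSC {d : ℕ} (f : EuclideanSpace ℝ (Fin d) → ℝ) (μ τ : ℝ) : Prop :=
  ∀ θ1 θ2 : EuclideanSpace ℝ (Fin d),
    f θ1 - f θ2 - ⟪gradient f θ2, θ1 - θ2⟫ ≥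
      μ / 2 * ‖θ1 - θ2‖ ^ 2 - τ / 2 * normL1 (θ1 - θ2) ^ 2

/-- Restricted smoothness. -/
def RSS {d : ℕ} (f : EuclideanSpace ℝ (Fin d) → ℝ) (L τ : ℝ) : Prop :=
  ∀ θ1 θ2 : EuclideanSpace ℝ (Fin d),
    f θ1 - f θ2 - ⟪gradient f θ2, θ1 - θ2⟫ ≤
      L / 2 * ‖θ1 - θ2‖ ^ 2 + τ / 2 * normL1 (θ1 - θ2) ^ 2

/-- Weak restricted strong convexity. -/
def WRSC {d : ℕ} (f : EuclideanSpace ℝ (Fin d) → ℝ) (μ τ : ℝ) : Prop :=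
  ∀ θ1 θ2 : EuclideanSpace ℝ (Fin d),
    (‖θ1 - θ2‖ ≤ 1 →
      f θ1 - f θ2 - ⟪gradient f θ2, θ1 - θ2⟫ ≥
        μ / 2 * ‖θ1 - θ2‖ ^ 2 - τ / 2 * normL1 (θ1 - θ2) ^ 2) ∧
    (1 < ‖θ1 - θ2‖ →
      f θ1 - f θ2 - ⟪gradient f θ2, θ1 - θ2⟫ ≥
        ‖θ1 - θ2‖ * (μ / 2 - τ / 2 * normL1 (θ1 - θ2) ^ 2 / ‖θ1 - θ2‖ ^ 2))

/-- Coordinate restriction of a vector to an index set `S`. -/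
def restr {d : ℕ} (S : Finset (Fin d)) (θ : EuclideanSpace ℝ (Fin d)) :
    EuclideanSpace ℝ (Fin d) :=
  WithLp.toLp 2 fun i => if i ∈ S then θ i else 0

lemma grad_ineq {d : ℕ} (f : EuclideanSpace ℝ (Fin d) → ℝ)
    (hconv : ConvexOn ℝ Set.univ f) (hdiff : Differentiable ℝ f)
    (a b : EuclideanSpace ℝ (Fin d)) : ⟪gradient f a, b - a⟫ ≤ f b - f a := by
  have h1 : ConvexOn ℝ Set.univ (fun t : ℝ => f (AffineMap.lineMap a b t)) := by
    exact hconv.comp_affineMap (AffineMap.lineMap (k := ℝ) a b)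
  have h2 : HasDerivAt (fun t : ℝ => f (AffineMap.lineMap a b t)) (⟪gradient f a, b - a⟫) 0 := by
    have hg : HasFDerivAt f (InnerProductSpace.toDual ℝ _ (gradient f a))
        (AffineMap.lineMap a b (0 : ℝ)) := by
      simpa using (hdiff a).hasGradientAt.hasFDerivAt
    have hl : HasDerivAt (fun t : ℝ => (AffineMap.lineMap a b t : EuclideanSpace ℝ (Fin d)))
        (b - a) 0 := AffineMap.hasDerivAt_lineMap
    exact hg.comp_hasDerivAt (0 : ℝ) hl
  have h3 := h1.le_slope_of_hasDerivAt (Set.mem_univ 0) (Set.mem_univ 1) one_pos h2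
  simpa [slope_def_field] using h3

lemma sum_sq_le_HT {d s : ℕ} (HT : EuclideanSpace ℝ (Fin d) → EuclideanSpace ℝ (Fin d))
    (hHT : IsHT d s HT) (g : EuclideanSpace ℝ (Fin d)) (T : Finset (Fin d)) (hT : T.card ≤ s) :
    ∑ i ∈ T, (g i) ^ 2 ≤ ‖HT g‖ ^ 2 := by
  obtain ⟨S, hS, hin, hout, hmax⟩ := hHT g
  have hn : ‖HT g‖ ^ 2 = ∑ i ∈ S, (g i) ^ 2 := by
    rw [EuclideanSpace.real_norm_sq_eq]
    rw [← Finset.sum_subset (Finset.subset_univ S)]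
    · exact Finset.sum_congr rfl fun i hi => by rw [hin i hi]
    · intro i _ hi
      simp [hout i hi]
  have hTd : T.card ≤ d := by simpa using Finset.card_le_univ T
  have hTS : T.card ≤ S.card := by rw [hS]; exact le_min hT hTd
  have hc : (T \ S).card ≤ (S \ T).card := Finset.card_sdiff_le_card_sdiff_iff.mpr hTS
  have key : ∑ i ∈ T \ S, (g i) ^ 2 ≤ ∑ i ∈ S \ T, (g i) ^ 2 := by
    rcases (T \ S).eq_empty_or_nonempty with he | hne
    · rw [he]; simpa using Finset.sum_nonneg fun i _ => sq_nonneg (g i)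
    · obtain ⟨j, hj, hjm⟩ := Finset.exists_max_image (T \ S) (fun i => (g i) ^ 2) hne
      calc ∑ i ∈ T \ S, (g i) ^ 2 ≤ (T \ S).card • (g j) ^ 2 := Finset.sum_le_card_nsmul _ _ _ hjm
        _ ≤ (S \ T).card • (g j) ^ 2 := nsmul_le_nsmul_left (sq_nonneg _) hc
        _ ≤ ∑ i ∈ S \ T, (g i) ^ 2 := Finset.card_nsmul_le_sum _ _ _ fun i hi =>
            sq_le_sq.mpr (hmax i (Finset.mem_sdiff.mp hi).1 j (Finset.mem_sdiff.mp hj).2)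
  rw [hn, ← Finset.sum_inter_add_sum_sdiff T S, ← Finset.sum_inter_add_sum_sdiff S T,
    Finset.inter_comm S T]
  linarith

lemma sum_mul_le_HT {d s : ℕ} (HT : EuclideanSpace ℝ (Fin d) → EuclideanSpace ℝ (Fin d))
    (hHT : IsHT d s HT) (g x : EuclideanSpace ℝ (Fin d)) (T : Finset (Fin d)) (hT : T.card ≤ s) :
    ∑ i ∈ T, g i * x i ≤ ‖HT g‖ * ‖x‖ := by
  have h1 := Finset.sum_mul_sq_le_sq_mul_sq T (fun i => g i) (fun i => x i)
  have h2 := sum_sq_le_HT HT hHT g T hT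
  have h3 : ∑ i ∈ T, (x i) ^ 2 ≤ ‖x‖ ^ 2 := by
    rw [EuclideanSpace.real_norm_sq_eq]
    exact Finset.sum_le_sum_of_subset_of_nonneg (Finset.subset_univ _)
      fun i _ _ => sq_nonneg _
  refine abs_le_of_sq_le_sq' (b := ‖HT g‖ * ‖x‖) ?_ (by positivity) |>.2
  rw [mul_pow]
  exact h1.trans (mul_le_mul h2 h3 (Finset.sum_nonneg fun i _ => sq_nonneg _) (sq_nonneg _))

lemma inner_le_HT {d s : ℕ} (HT : EuclideanSpace ℝ (Fin d) → EuclideanSpace ℝ (Fin d))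
    (hHT : IsHT d s HT) (g a c : EuclideanSpace ℝ (Fin d)) (ha : spar a ≤ s) (hc : spar c ≤ s) :
    ⟪a - c, g⟫ ≤ 2 * (‖HT g‖ * ‖a - c‖) := by
  set A := Finset.univ.filter fun i => a i ≠ 0 with hA
  set C := Finset.univ.filter fun i => c i ≠ 0 with hC
  have h1 := sum_mul_le_HT HT hHT g (a - c) A ha
  have h2 := sum_mul_le_HT HT hHT g (a - c) (C \ A)
    ((Finset.card_le_card Finset.sdiff_subset).trans hc)
  have h3 : ⟪a - c, g⟫ = ∑ i ∈ A ∪ (C \ A), g i * (a - c) i := by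
    rw [Finset.sum_subset (Finset.subset_univ _)]
    · simp [PiLp.inner_apply]
    · intro i _ hi
      simp only [hA, hC, Finset.mem_union, Finset.mem_sdiff, Finset.mem_filter, Finset.mem_univ,
        true_and] at hi
      have : a i = 0 ∧ c i = 0 := by tauto
      simp [this]
  rw [h3, Finset.sum_union Finset.disjoint_sdiff]
  linarith

/-- Theorem 1 of the paper: near `θ̂` the thresholded step expands distances by at most `1+4η`. -/
theorem statement3 {d : ℕ} (f : EuclideanSpace ℝ (Fin d) → ℝ)
    (μ τ L : ℝ) (sstar s : ℕ)
    (hconv : ConvexOn ℝ Set.univ f) (hdiff : Differentiable ℝ f)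
    (hRSC : RSC f μ τ) (hRSS : RSS f L τ)
    (hsstar : 1 ≤ sstar) (hss : sstar ≤ s)
    (hmu : 0 < μ - 3 * τ * s)
    (HT : EuclideanSpace ℝ (Fin d) → EuclideanSpace ℝ (Fin d)) (hHT : IsHT d s HT)
    (Φ : EuclideanSpace ℝ (Fin d) → EuclideanSpace ℝ (Fin d))
    (hΦ : ∀ z, spar (Φ z) ≤ s)
    (η : ℝ) (hη0 : 0 ≤ η) (hη : η ≤ 1 / 4)
    (hconc : ∀ z y : EuclideanSpace ℝ (Fin d), spar y ≤ sstar →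
      ⟪y - Φ z, z - Φ z⟫ ≤ η * ‖y - Φ z‖ ^ 2)
    (θhat θt : EuclideanSpace ℝ (Fin d))
    (hθhat : spar θhat ≤ sstar) (hθt : spar θt ≤ s)
    (hnear : ‖θt - θhat‖ ^ 2 < 36 * ‖HT (gradient f θhat)‖ ^ 2 / (μ - 3 * τ * s) ^ 2)
    (γ : ℝ)
    (hγ : γ = max (f θt - f θhat) 0 / (5 * ‖HT (gradient f θt)‖ ^ 2))
    (θnext : EuclideanSpace ℝ (Fin d))
    (hnext : θnext = Φ (θt - γ • gradient f θt)) :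
    ‖θnext - θhat‖ ^ 2 ≤ (1 + 4 * η) * ‖θt - θhat‖ ^ 2 := by
  set g := gradient f θt with hg
  have hgr : ⟪g, θhat - θt⟫ ≤ f θhat - f θt := grad_ineq f hconv hdiff θt θhat
  have hin := inner_le_HT HT hHT g θt θnext hθt (hnext ▸ hΦ _)
  have hcc := hconc (θt - γ • g) θhat hθhat
  rw [← hnext] at hcc
  set G := ‖HT g‖ with hG
  have hG0 : 0 ≤ G := norm_nonneg _
  have hγ0 : 0 ≤ γ := by rw [hγ]; positivity
  have hid : ⟪θhat - θnext, θt - γ • g - θnext⟫ =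
      (‖θnext - θhat‖ ^ 2 + ‖θt - θnext‖ ^ 2 - ‖θt - θhat‖ ^ 2) / 2
        - γ * (⟪g, θhat - θt⟫ + ⟪θt - θnext, g⟫) := by
    simp only [← real_inner_self_eq_norm_sq, inner_sub_left, inner_sub_right, inner_smul_right]
    simp only [real_inner_comm θhat θnext, real_inner_comm θt θnext, real_inner_comm θhat θt,
      real_inner_comm g θhat, real_inner_comm g θt, real_inner_comm g θnext]
    ring
  have hstep : γ * (f θt - f θhat) = 5 * γ ^ 2 * G ^ 2 := by
    rcases eq_or_lt_of_le hγ0 with h0 | hpos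
    · rw [← h0]; ring
    · have hGne : G ≠ 0 := by
        intro h; rw [hγ, h] at hpos; simp at hpos
      have hΔ : 0 < f θt - f θhat := by
        by_contra h
        rw [hγ, max_eq_right (not_lt.mp h)] at hpos; simp at hpos
      rw [max_eq_left hΔ.le] at hγ
      have : f θt - f θhat = γ * (5 * G ^ 2) := by rw [hγ]; field_simp
      rw [this]; ring
  rw [hid, norm_sub_rev θhat θnext] at hcc
  have h1 := mul_le_mul_of_nonneg_left hgr hγ0
  have h2 := mul_le_mul_of_nonneg_left hin hγ0
  have h3 : (1 - 2 * η) * ‖θnext - θhat‖ ^ 2 ≤ ‖θt - θhat‖ ^ 2 := by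
    nlinarith [sq_nonneg (‖θt - θnext‖ - 2 * (γ * G)), sq_nonneg (γ * G)]
  have h4 : 0 ≤ (2 * η - 8 * η ^ 2) * ‖θnext - θhat‖ ^ 2 :=
    mul_nonneg (by nlinarith) (sq_nonneg _)
  have h5 := mul_le_mul_of_nonneg_left h3 (by linarith : 0 ≤ 1 + 4 * η)
  nlinarith
end
end

section
/- Let Φ_s be a sparsifying operator at level s on ℝ^d and let η ∈ [0, 1/4] be an upper bound on its relative concavity at sparsity level s*. Let θ̃ ∈ ℝ^d, set θ⁺ = Φ_s(θ̃), let θ̂ ∈ ℝ^d with ‖θ̂‖₀ ≤ s*, and let S be the union of the supports of θ⁺ and θ̂. Then ‖θ⁺ − θ̂‖² ≤ (1 + 4η)‖[θ̃]_S − θ̂‖², where [θ̃]_S agrees with θ̃ on coordinates in S and vanishes outside S. -/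
open scoped RealInnerProductSpace BigOperators

noncomputable section

/-- Equation (8) in the paper: the deviation introduced by the sparsifying operator is controlled
by the relative concavity bound `η ≤ 1/4`. -/
theorem statement5 {d : ℕ} (s sstar : ℕ)
    (Φ : EuclideanSpace ℝ (Fin d) → EuclideanSpace ℝ (Fin d))
    (hΦ : ∀ z, spar (Φ z) ≤ s)
    (η : ℝ) (hη0 : 0 ≤ η) (hη : η ≤ 1 / 4)
    (hconc : ∀ z y : EuclideanSpace ℝ (Fin d), spar y ≤ sstar →
      ⟪y - Φ z, z - Φ z⟫ ≤ η * ‖y - Φ z‖ ^ 2)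
    (θtil θhat : EuclideanSpace ℝ (Fin d)) (hθhat : spar θhat ≤ sstar)
    (S : Finset (Fin d))
    (hS : S = (Finset.univ.filter fun i => Φ θtil i ≠ 0) ∪
      (Finset.univ.filter fun i => θhat i ≠ 0)) :
    ‖Φ θtil - θhat‖ ^ 2 ≤ (1 + 4 * η) * ‖restr S θtil - θhat‖ ^ 2 := by
  have hc := hconc θtil θhat hθhat
  have h1 : ⟪θhat - Φ θtil, θtil - Φ θtil⟫ =
      ⟪θhat - Φ θtil, (restr S θtil - θhat) + (θhat - Φ θtil)⟫ := by
    simp only [PiLp.inner_apply]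
    refine Finset.sum_congr rfl fun i _ => ?_
    by_cases hi : i ∈ S
    · simp [restr, hi]
    · have h2 : Φ θtil i = 0 ∧ θhat i = 0 := by
        rw [hS] at hi
        simpa using hi
      simp [h2.1, h2.2]
  rw [h1, inner_add_right, real_inner_self_eq_norm_sq] at hc
  have hcs := abs_real_inner_le_norm (θhat - Φ θtil) (restr S θtil - θhat)
  have hcs' := (abs_le.mp hcs).1
  rw [norm_sub_rev (Φ θtil) θhat]
  have ha : 0 ≤ ‖θhat - Φ θtil‖ := norm_nonneg _
  have hb : 0 ≤ ‖restr S θtil - θhat‖ := norm_nonneg _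
  generalize ‖θhat - Φ θtil‖ = a at *
  generalize ‖restr S θtil - θhat‖ = b at *
  have h3 : (1 - η) * a ≤ b := by
    rcases ha.eq_or_lt with h | h
    · rw [← h]; simpa using hb
    · refine le_of_mul_le_mul_left ?_ h
      nlinarith
  have h4 : ((1 - η) * a) ^ 2 ≤ b ^ 2 :=
    pow_le_pow_left₀ (mul_nonneg (by linarith) ha) h3 2
  have h5 : 1 ≤ (1 + 4 * η) * (1 - η) ^ 2 := by
    have : 0 ≤ η * (2 - 7 * η + 4 * η ^ 2) := mul_nonneg hη0 (by nlinarith)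
    nlinarith
  calc a ^ 2 = 1 * a ^ 2 := by ring
    _ ≤ ((1 + 4 * η) * (1 - η) ^ 2) * a ^ 2 := by gcongr
    _ = (1 + 4 * η) * ((1 - η) * a) ^ 2 := by ring
    _ ≤ (1 + 4 * η) * b ^ 2 := by gcongr
end
end

section
/- For any vectors g, v ∈ ℝ^d and any natural number k, if ‖v‖₀ ≤ k then |⟨g, v⟩| ≤ ‖Φ^HT_k(g)‖ · ‖v‖. -/
open scoped RealInnerProductSpace BigOperators

noncomputable section

/-- Restricted Cauchy–Schwarz: pairing a vector with a `k`-sparse vector only sees the `k`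
largest-magnitude entries. -/
theorem statement7 {d k : ℕ}
    (HT : EuclideanSpace ℝ (Fin d) → EuclideanSpace ℝ (Fin d)) (hHT : IsHT d k HT)
    (g v : EuclideanSpace ℝ (Fin d)) (hv : spar v ≤ k) :
    |⟪g, v⟫| ≤ ‖HT g‖ * ‖v‖ := by
  obtain ⟨S, hc, hS, hS0, hord⟩ := hHT g
  set T : Finset (Fin d) := Finset.univ.filter fun i => v i ≠ 0 with hT
  have hTk : T.card ≤ k := hv
  have hTS : T.card ≤ S.card := by
    rw [hc]
    refine le_min hTk ?_
    simpa using Finset.card_le_univ T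
  have hcard : (T \ S).card ≤ (S \ T).card := by
    have h1 := Finset.card_sdiff_add_card_inter T S
    have h2 := Finset.card_sdiff_add_card_inter S T
    rw [Finset.inter_comm] at h2
    omega
  have hdiff : ∑ i ∈ T \ S, (g i) ^ 2 ≤ ∑ i ∈ S \ T, (g i) ^ 2 := by
    rcases (S \ T).eq_empty_or_nonempty with he | hne
    · have h0 : T \ S = ∅ := by
        rw [← Finset.card_eq_zero]
        rw [he, Finset.card_empty] at hcard
        omega
      rw [h0, he]
    · obtain ⟨m, hm, hmin⟩ := Finset.exists_min_image (S \ T) (fun i => (g i) ^ 2) hne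
      calc ∑ i ∈ T \ S, (g i) ^ 2 ≤ (T \ S).card • (g m) ^ 2 := by
            refine Finset.sum_le_card_nsmul _ _ _ fun i hi => ?_
            exact sq_le_sq.mpr (hord m (Finset.mem_sdiff.mp hm).1 i (Finset.mem_sdiff.mp hi).2)
        _ ≤ (S \ T).card • (g m) ^ 2 := nsmul_le_nsmul_left (sq_nonneg _) hcard
        _ ≤ ∑ i ∈ S \ T, (g i) ^ 2 := Finset.card_nsmul_le_sum _ _ _ hmin
  have hsum : ∑ i ∈ T, (g i) ^ 2 ≤ ∑ i ∈ S, (g i) ^ 2 := by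
    have h1 := Finset.sum_inter_add_sum_sdiff T S (fun i => (g i) ^ 2)
    have h2 := Finset.sum_inter_add_sum_sdiff S T (fun i => (g i) ^ 2)
    rw [Finset.inter_comm] at h2
    linarith
  have hin : ⟪g, v⟫ = ⟪restr T g, v⟫ := by
    simp only [PiLp.inner_apply]
    refine Finset.sum_congr rfl fun i _ => ?_
    by_cases h : v i = 0 <;> simp [restr, hT, h]
  have hn1 : ‖restr T g‖ ^ 2 = ∑ i ∈ T, (g i) ^ 2 := by
    rw [EuclideanSpace.norm_sq_eq, ← Finset.sum_subset (Finset.subset_univ T)]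
    · exact Finset.sum_congr rfl fun i hi => by simp [restr, hi]
    · intro i _ hi
      simp [restr, hi]
  have hn2 : ‖HT g‖ ^ 2 = ∑ i ∈ S, (g i) ^ 2 := by
    rw [EuclideanSpace.norm_sq_eq, ← Finset.sum_subset (Finset.subset_univ S)]
    · exact Finset.sum_congr rfl fun i hi => by simp [hS i hi]
    · intro i _ hi
      simp [hS0 i hi]
  have hle : ‖restr T g‖ ≤ ‖HT g‖ := by
    refine (sq_le_sq₀ (norm_nonneg _) (norm_nonneg _)).mp ?_
    rw [hn1, hn2]
    exact hsum
  rw [hin]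
  exact (abs_real_inner_le_norm _ _).trans
    (mul_le_mul_of_nonneg_right hle (norm_nonneg _))
end
end

section
/- Let 1 ≤ s* < s < d. The relative concavity of the reciprocal thresholding operator Φ^RT_s at sparsity level s* satisfies η_{s*}(Φ^RT_s) ≤ (s*/s) / min{1, 4(1 − s*/s)}; that is, for all y, z ∈ ℝ^d with ‖y‖₀ ≤ s* and y ≠ Φ^RT_s(z), ⟨y − Φ^RT_s(z), z − Φ^RT_s(z)⟩ ≤ ((s*/s)/min{1, 4(1 − s*/s)})·‖y − Φ^RT_s(z)‖². -/
open scoped RealInnerProductSpace BigOperators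

noncomputable section

theorem amgm_aux (c m u r t : ℝ) (hc : 0 < c) (hm : 1 ≤ 4 * c * m) (hr : r ^ 2 ≤ t) :
    u * r - c * u ^ 2 ≤ t * m := by
  have hm0 : 0 < m := by
    by_contra h
    push Not at h
    nlinarith
  have h1 : r ^ 2 * m ≤ t * m := mul_le_mul_of_nonneg_right hr hm0.le
  have h2 : 0 ≤ c * (c * u ^ 2 - u * r + r ^ 2 * m) := by
    nlinarith [sq_nonneg (c * u - r / 2), mul_le_mul_of_nonneg_left hm (sq_nonneg r)]
  have h3 := nonneg_of_mul_nonneg_right h2 hc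
  linarith

theorem rt_aux (x w t : ℝ) (ht : 0 ≤ t) (htx : t ≤ |x|)
    (hw : w = Real.sign x * (|x| + Real.sqrt (x ^ 2 - t ^ 2)) / 2) :
    w * (x - w) = t ^ 2 / 4 ∧ (x - w) ^ 2 ≤ t ^ 2 / 4 := by
  have hx2 : t ^ 2 ≤ x ^ 2 := by
    rw [← sq_abs x]; gcongr
  have hq := Real.sq_sqrt (sub_nonneg.2 hx2)
  have hq0 := Real.sqrt_nonneg (x ^ 2 - t ^ 2)
  set q := Real.sqrt (x ^ 2 - t ^ 2)
  have hqx : q ≤ |x| := by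
    apply abs_le_of_sq_le_sq' _ (abs_nonneg x) |>.2
    rw [sq_abs]; nlinarith [sq_nonneg t]
  rcases lt_trichotomy x 0 with h | h | h
  · rw [Real.sign_of_neg h, abs_of_neg h] at hw
    rw [abs_of_neg h] at hqx
    subst hw
    constructor <;> nlinarith
  · subst h
    have : t = 0 := by rw [abs_zero] at htx; linarith
    subst this
    simp at hw
    subst hw
    simp
  · rw [Real.sign_of_pos h, abs_of_pos h] at hw
    rw [abs_of_pos h] at hqx
    subst hw
    constructor <;> nlinarith

/-- Bound on the relative concavity of the reciprocal thresholding operator. -/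
theorem statement9 {d : ℕ} (sstar s : ℕ)
    (h1 : 1 ≤ sstar) (h2 : sstar < s) (h3 : s < d)
    (RT : EuclideanSpace ℝ (Fin d) → EuclideanSpace ℝ (Fin d)) (hRT : IsRT d s RT)
    (y z : EuclideanSpace ℝ (Fin d)) (hy : spar y ≤ sstar) (hne : y ≠ RT z) :
    ⟪y - RT z, z - RT z⟫ ≤
      (((sstar : ℝ) / s) / min 1 (4 * (1 - (sstar : ℝ) / s))) * ‖y - RT z‖ ^ 2 := by
  obtain ⟨S, hS, hSm, t, ht, ⟨j, hj, hjt⟩, hin, hout⟩ := hRT z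
  have ht0 : 0 ≤ t := hjt ▸ abs_nonneg _
  have hsp : (0 : ℝ) < sstar := by exact_mod_cast h1
  have hs : (0 : ℝ) < s := by exact_mod_cast (by omega : 0 < s)
  have hlt : (sstar : ℝ) < s := by exact_mod_cast h2
  have hρ0 : 0 < (sstar : ℝ) / s := by positivity
  have hρ1 : (sstar : ℝ) / s < 1 := (div_lt_one hs).2 hlt
  have hk : (sstar : ℝ) / s * ((s : ℝ) / sstar) = 1 := by field_simp
  have hk0 : 0 < (s : ℝ) / sstar := by positivity
  have hks : (s : ℝ) / sstar * sstar = s := by field_simp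
  generalize (sstar : ℝ) / s = ρ at *
  generalize (s : ℝ) / sstar = k at *
  have hm : 0 < min 1 (4 * (1 - ρ)) := lt_min one_pos (by linarith)
  have hc0 : 0 < ρ / min 1 (4 * (1 - ρ)) := div_pos hρ0 hm
  have hcm : ρ / min 1 (4 * (1 - ρ)) * min 1 (4 * (1 - ρ)) = ρ := div_mul_cancel₀ _ hm.ne'
  have hc1 := mul_le_mul_of_nonneg_left (min_le_left 1 (4 * (1 - ρ))) hc0.le
  have hc2 := mul_le_mul_of_nonneg_left (min_le_right 1 (4 * (1 - ρ))) hc0.le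
  rw [hcm] at hc1 hc2
  generalize ρ / min 1 (4 * (1 - ρ)) = c at *
  have hck : 1 ≤ c * k := by nlinarith
  have hck2 : 1 ≤ 4 * c * (k - 1) := by
    have := mul_le_mul_of_nonneg_right hc2 hk0.le
    have e : c * (4 * (1 - ρ)) * k = 4 * c * (k - ρ * k) := by ring
    rw [e, hk] at this
    exact this
  have key : ∀ i, (y i - RT z i) * (z i - RT z i) - c * (y i - RT z i) ^ 2 ≤
      t ^ 2 / 4 * ((if y i ≠ 0 then k else 0) - (if i ∈ S then 1 else 0)) := by
    intro i
    by_cases hi : i ∈ S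
    · obtain ⟨e1, e2⟩ := rt_aux (z i) (RT z i) t ht0 (hjt ▸ hSm i hi j hj) (hin i hi)
      by_cases hyi : y i = 0
      · simp only [hyi, hi, ne_eq, not_true_eq_false, if_true, if_false]
        nlinarith [mul_nonneg hc0.le (sq_nonneg (RT z i))]
      · simp only [hyi, hi, ne_eq, not_false_eq_true, if_true]
        exact amgm_aux c _ _ _ _ hc0 hck2 e2
    · have hz : (z i) ^ 2 ≤ t ^ 2 := by
        rw [← sq_abs (z i)]
        have := ht i hi
        gcongr
      by_cases hyi : y i = 0
      · simp [hyi, hi, hout i hi]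
      · simp only [hyi, hi, hout i hi, ne_eq, not_false_eq_true, if_true, if_false, sub_zero]
        have := amgm_aux c (k / 4) (y i) (z i) (t ^ 2) hc0 (by linarith) hz
        linarith
  have hsum := Finset.sum_le_sum (fun i (_ : i ∈ Finset.univ) => key i)
  rw [Finset.sum_sub_distrib, ← Finset.mul_sum, ← Finset.mul_sum, Finset.sum_sub_distrib] at hsum
  have hA : (∑ i, if y i ≠ 0 then k else 0) = spar y * k := by
    rw [← Finset.sum_filter, Finset.sum_const, nsmul_eq_mul, spar]
  have hB : (∑ i, if i ∈ S then (1 : ℝ) else 0) = s := by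
    rw [Finset.sum_ite_mem, Finset.univ_inter, Finset.sum_const, hS, min_eq_left h3.le]
    simp
  rw [hA, hB] at hsum
  have hy' : (spar y : ℝ) ≤ sstar := by exact_mod_cast hy
  have hneg : t ^ 2 / 4 * (spar y * k - s) ≤ 0 := by
    apply mul_nonpos_of_nonneg_of_nonpos (by positivity)
    nlinarith
  have hI : ⟪y - RT z, z - RT z⟫ = ∑ i, (y i - RT z i) * (z i - RT z i) := by
    simp [PiLp.inner_apply, mul_comm]
  have hN : ‖y - RT z‖ ^ 2 = ∑ i, (y i - RT z i) ^ 2 := by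
    simp [EuclideanSpace.norm_sq_eq]
  rw [hI, hN]
  linarith
end
end

section
/- There exist universal constants c₀, c₁ > 0 such that the following holds for all positive integers n, d, s*, s with 1 ≤ s* < s < d. Let Σ be a d×d positive definite matrix with ζ(Σ) = max_i Σ_{ii}, let θ* ∈ ℝ^d with ‖θ*‖₀ ≤ s*, and let σ > 0. Let X ∈ ℝ^{n×d} be random with i.i.d. rows distributed as the centered multivariate Gaussian N(0,Σ), let w ∈ ℝ^n be an independent Gaussian vector N(0, σ²I_n), and set y = Xθ* + w and f(θ) = (1/(2n))‖y − Xθ‖². Define L = 2σ_max(Σ), μ = σ_min(Σ)/2, τ = c₁·ζ(Σ)·log(d)/n, μ̄ = μ − 3τs, κ̄ = (L + 3τs)/μ̄, C = 2√(ζ(Σ)), and R = 288·C²σ²·s·log(d)/(n·μ̄²). Assume μ̄ > 0, κ̄ ≥ 1 and s ≥ 320·κ̄·s*. Let θ_0 ∈ ℝ^d with ‖θ_0‖₀ ≤ s and θ_{t+1} = Φ^RT_s(θ_t − γ_t ∇f(θ_t)) with γ_t = max{f(θ_t) − f(θ*), 0}/(5‖Φ^HT_s(∇f(θ_t))‖²)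 (with the convention γ_t = 0 if the denominator vanishes). Then with probability at least 1 − e^{−c₀ n} − 2/d the following two statements hold simultaneously: (i) for every t, if ‖θ_t − θ*‖² ≥ R then ‖θ_{t+1} − θ*‖² ≤ (1 − 1/(80κ̄))‖θ_t − θ*‖²; (ii) if ‖θ_T − θ*‖² < R for some index T, then ‖θ_t − θ*‖² ≤ (1 + 1/(80κ̄))·R for all t ≥ T. -/
open scoped RealInnerProductSpace BigOperators

noncomputable section

open MeasureTheory ProbabilityTheory
open scoped MatrixOrder

/-- Scalar facts about reciprocal thresholding. -/
lemma rt_scalar (z τ : ℝ) (hτ : 0 ≤ τ) (hz : τ ≤ |z|) (Φ : ℝ)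
    (hΦ : Φ = Real.sign z * (|z| + Real.sqrt (z ^ 2 - τ ^ 2)) / 2) :
    Φ * (z - Φ) = τ ^ 2 / 4 ∧ |z - Φ| ≤ τ := by
  have h0 : 0 ≤ z ^ 2 - τ ^ 2 := by
    have := sq_abs z
    nlinarith
  set r := Real.sqrt (z ^ 2 - τ ^ 2) with hr
  have hr0 : 0 ≤ r := Real.sqrt_nonneg _
  have hr2 : r ^ 2 = z ^ 2 - τ ^ 2 := Real.sq_sqrt h0
  have hle : r ≤ |z| := by
    apply abs_le_of_sq_le_sq' _ (abs_nonneg z) |>.2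
    rw [sq_abs]; nlinarith
  have hge : |z| - τ ≤ r := by
    apply Real.le_sqrt_of_sq_le
    have := sq_abs z
    nlinarith
  rcases lt_trichotomy z 0 with h | h | h
  · rw [Real.sign_of_neg h] at hΦ
    rw [abs_of_neg h] at *
    subst hΦ
    constructor
    · nlinarith
    · rw [abs_le]; constructor <;> nlinarith
  · subst h
    simp at hz hΦ
    have : τ = 0 := le_antisymm hz hτ
    subst this; subst hΦ; simp
  · rw [Real.sign_of_pos h] at hΦ
    rw [abs_of_pos h] at *
    subst hΦ
    constructor
    · nlinarith
    · rw [abs_le]; constructor <;> nlinarith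

lemma rt_spar {d s : ℕ} {RT : EuclideanSpace ℝ (Fin d) → EuclideanSpace ℝ (Fin d)}
    (h : IsRT d s RT) (z : EuclideanSpace ℝ (Fin d)) : spar (RT z) ≤ s := by
  obtain ⟨S, hS, -, τ, -, -, -, h0⟩ := h z
  unfold spar
  calc _ ≤ S.card := by
        apply Finset.card_le_card
        intro i hi
        simp at hi
        by_contra hc
        exact hi (h0 i hc)
    _ ≤ s := by rw [hS]; exact min_le_left _ _

lemma inner_eq_sum {d : ℕ} (x y : EuclideanSpace ℝ (Fin d)) : ⟪x, y⟫ = ∑ i, x i * y i := by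
  rw [PiLp.inner_apply]
  apply Finset.sum_congr rfl
  intro i _
  simp [mul_comm]

lemma norm_sq_eq_sum {d : ℕ} (x : EuclideanSpace ℝ (Fin d)) : ‖x‖ ^ 2 = ∑ i, x i ^ 2 := by
  rw [EuclideanSpace.norm_sq_eq]
  simp

/-- Relative concavity of reciprocal thresholding. -/
lemma rt_concave {d s k : ℕ} {RT : EuclideanSpace ℝ (Fin d) → EuclideanSpace ℝ (Fin d)}
    (h : IsRT d s RT) (hk : 1 ≤ k) (hks : k < s) (hsd : s < d) (y z : EuclideanSpace ℝ (Fin d))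
    (hy : spar y ≤ k) :
    ⟪y - RT z, z - RT z⟫ ≤ (k / (s - k : ℝ)) * ‖y - RT z‖ ^ 2 := by
  obtain ⟨S, hS, hdom, τ, hτ, ⟨j0, hj0, hj0τ⟩, h1, h0⟩ := h z
  have hτ0 : 0 ≤ τ := hj0τ ▸ abs_nonneg _
  rw [min_eq_left hsd.le] at hS
  have hkpos : (0 : ℝ) < k := by exact_mod_cast hk
  have hsk : (0 : ℝ) < s - k := by
    have : (k : ℝ) < s := by exact_mod_cast hks
    linarith
  set β : ℝ := k / (s - k : ℝ) with hβ
  have hβ0 : 0 < β := by positivity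
  have key : ∀ i, (y i - RT z i) * (z i - RT z i) ≤ β * (y i - RT z i) ^ 2
      + (if y i ≠ 0 then τ ^ 2 / (4 * β) else 0) - (if i ∈ S ∧ y i = 0 then τ ^ 2 / 4 else 0) := by
    intro i
    have amgm : ∀ D : ℝ, τ * |D| ≤ β * D ^ 2 + τ ^ 2 / (4 * β) := by
      intro D
      have e : β * D ^ 2 + τ ^ 2 / (4 * β) - τ * |D| = (2 * β * |D| - τ) ^ 2 / (4 * β) := by
        rw [← sq_abs D]
        field_simp
        ring
      have : 0 ≤ (2 * β * |D| - τ) ^ 2 / (4 * β) := by positivity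
      linarith
    have hD : 0 ≤ β * (y i - RT z i) ^ 2 := by positivity
    have cs : ∀ a D : ℝ, |a| ≤ τ → D * a ≤ τ * |D| := by
      intro a D ha
      calc D * a ≤ |D * a| := le_abs_self _
        _ = |a| * |D| := by rw [abs_mul, mul_comm]
        _ ≤ _ := by gcongr
    by_cases hi : i ∈ S
    · have hz : τ ≤ |z i| := hj0τ ▸ hdom i hi j0 hj0
      obtain ⟨e1, e2⟩ := rt_scalar (z i) τ hτ0 hz _ (h1 i hi)
      by_cases hyi : y i = 0
      · simp only [hyi, hi, ne_eq, not_true_eq_false, if_false, and_self, if_true] at hD ⊢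
        nlinarith
      · simp only [hyi, hi, ne_eq, not_false_eq_true, if_true, and_false, if_false]
        have := cs _ (y i - RT z i) e2
        have := amgm (y i - RT z i)
        linarith
    · have hr := h0 i hi
      by_cases hyi : y i = 0
      · simp [hyi, hi, hr]
      · simp only [hyi, hi, ne_eq, not_false_eq_true, if_true, and_false, if_false]
        have := cs (z i - RT z i) (y i - RT z i) (by rw [hr, sub_zero]; exact hτ i hi)
        have := amgm (y i - RT z i)
        linarith
  have hsum := Finset.sum_le_sum (fun i (_ : i ∈ Finset.univ) => key i)
  rw [inner_eq_sum, norm_sq_eq_sum]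
  simp only [PiLp.sub_apply]
  refine hsum.trans ?_
  rw [Finset.sum_sub_distrib, Finset.sum_add_distrib, ← Finset.mul_sum]
  rw [← Finset.sum_filter, ← Finset.sum_filter, Finset.sum_const, Finset.sum_const]
  have c1 : ((Finset.univ.filter fun i => y i ≠ 0).card : ℝ) ≤ k := Nat.cast_le.2 hy
  have c2 : (s : ℝ) ≤ ((Finset.univ.filter fun i => i ∈ S ∧ y i = 0).card : ℝ) + k := by
    have : S.card ≤ (Finset.univ.filter fun i => i ∈ S ∧ y i = 0).card
        + (Finset.univ.filter fun i => y i ≠ 0).card := by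
      refine le_trans (Finset.card_le_card ?_) (Finset.card_union_le _ _)
      intro i hi
      simp only [Finset.mem_union, Finset.mem_filter, Finset.mem_univ, true_and, hi]
      tauto
    rw [hS] at this
    have t : (s : ℝ) ≤ ((Finset.univ.filter fun i => i ∈ S ∧ y i = 0).card : ℝ)
        + ((Finset.univ.filter fun i => y i ≠ 0).card : ℝ) := by exact_mod_cast this
    linarith
  simp only [nsmul_eq_mul]
  have e : τ ^ 2 / (4 * β) = τ ^ 2 / 4 * ((s - k) / k) := by
    rw [hβ]; field_simp
  rw [e]
  set a := ((Finset.univ.filter fun i => y i ≠ 0).card : ℝ)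
  set b := ((Finset.univ.filter fun i => i ∈ S ∧ y i = 0).card : ℝ)
  have f1 : a * (τ ^ 2 / 4 * ((s - k) / k)) ≤ k * (τ ^ 2 / 4 * ((s - k) / k)) := by
    gcongr
  have f2 : (k : ℝ) * (τ ^ 2 / 4 * ((s - k) / k)) = τ ^ 2 / 4 * (s - k) := by
    field_simp
  have f3 : τ ^ 2 / 4 * (s - k) ≤ b * (τ ^ 2 / 4) := by
    rw [mul_comm b]; gcongr; linarith
  linarith

/-- Hard thresholding captures the largest energy. -/
lemma ht_energy {d s : ℕ} {HT : EuclideanSpace ℝ (Fin d) → EuclideanSpace ℝ (Fin d)}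
    (h : IsHT d s HT) (hsd : s < d) (g : EuclideanSpace ℝ (Fin d)) (A : Finset (Fin d))
    (hA : A.card ≤ s) : ∑ i ∈ A, g i ^ 2 ≤ ‖HT g‖ ^ 2 := by
  obtain ⟨S, hS, h1, h0, hdom⟩ := h g
  rw [min_eq_left hsd.le] at hS
  have e : ‖HT g‖ ^ 2 = ∑ i ∈ S, g i ^ 2 := by
    rw [norm_sq_eq_sum, ← Finset.sum_subset (Finset.subset_univ S)]
    · exact Finset.sum_congr rfl (fun i hi => by rw [h1 i hi])
    · intro i _ hi
      rw [h0 i hi]; simp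
  rw [e, ← Finset.sum_inter_add_sum_sdiff A S, ← Finset.sum_inter_add_sum_sdiff S A,
    Finset.inter_comm S A]
  refine add_le_add le_rfl ?_
  have hc : (A \ S).card ≤ (S \ A).card := by
    have := Finset.card_sdiff_add_card_inter A S
    have h2 := Finset.card_sdiff_add_card_inter S A
    rw [Finset.inter_comm] at h2
    omega
  rcases (A \ S).eq_empty_or_nonempty with he | he
  · rw [he]; simp; positivity
  · obtain ⟨m, hm, hmax⟩ := Finset.exists_max_image (A \ S) (fun i => g i ^ 2) he
    calc ∑ i ∈ A \ S, g i ^ 2 ≤ (A \ S).card • (g m ^ 2) := Finset.sum_le_card_nsmul _ _ _ hmax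
      _ ≤ (S \ A).card • (g m ^ 2) := by
        simp only [nsmul_eq_mul]; gcongr
      _ ≤ _ := by
        apply Finset.card_nsmul_le_sum
        intro i hi
        apply sq_le_sq.2
        exact hdom i (Finset.mem_sdiff.1 hi).1 m (Finset.mem_sdiff.1 hm).2

lemma grad_ls {d : ℕ} {W : Type*} [NormedAddCommGroup W] [InnerProductSpace ℝ W] [CompleteSpace W]
    (A : EuclideanSpace ℝ (Fin d) →L[ℝ] W) (b : W) (n : ℝ) (θ h : EuclideanSpace ℝ (Fin d)) :
    ⟪gradient (fun θ => 1 / (2 * n) * ‖b - A θ‖ ^ 2) θ, h⟫ = 1 / n * ⟪A θ - b, A h⟫ := by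
  have h1 : HasFDerivAt (fun θ : EuclideanSpace ℝ (Fin d) => b - A θ) (-A) θ :=
    (A.hasFDerivAt (x := θ)).const_sub b
  have h2 := (h1.norm_sq).const_mul (1 / (2 * n))
  have h3 : HasGradientAt (fun θ => 1 / (2 * n) * ‖b - A θ‖ ^ 2) _ θ := h2.hasGradientAt
  rw [h3.gradient, InnerProductSpace.toDual_symm_apply]
  simp only [smul_apply, ContinuousLinearMap.comp_apply,
    neg_apply, innerSL_apply_apply, inner_neg_right, smul_eq_mul,
    inner_sub_left]
  by_cases hn : n = 0
  · simp [hn]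
  · field_simp
    simp

/-- The one-step inequality, valid without any event. -/
lemma step_basic {d s k : ℕ} {HT RT : EuclideanSpace ℝ (Fin d) → EuclideanSpace ℝ (Fin d)}
    (hHT : IsHT d s HT) (hRT : IsRT d s RT) (hk : 1 ≤ k) (hks : k < s) (hsd : s < d)
    (θstar θ g : EuclideanSpace ℝ (Fin d)) (η : ℝ)
    (hstar : spar θstar ≤ k) (hθ : spar θ ≤ s) :
    (1 - 2 * (k / (s - k : ℝ))) * ‖RT (θ - η • g) - θstar‖ ^ 2 ≤
      ‖θ - θstar‖ ^ 2 - 2 * η * ⟪g, θ - θstar⟫ + 2 * η ^ 2 * ‖HT g‖ ^ 2 := by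
  set p := RT (θ - η • g) with hp
  have h1 := rt_concave hRT hk hks hsd θstar (θ - η • g) hstar
  rw [← hp] at h1
  have hps : spar p ≤ s := rt_spar hRT _
  have h2 : 2 * η * ⟪g, θ - p⟫ ≤ ‖θ - p‖ ^ 2 + 2 * η ^ 2 * ‖HT g‖ ^ 2 := by
    set A1 := Finset.univ.filter fun i => θ i ≠ 0
    set A2 := Finset.univ.filter fun i => p i ≠ 0
    have e1 := ht_energy hHT hsd g A1 hθ
    have e2 := ht_energy hHT hsd g A2 hps
    have e3 : ∑ i ∈ A1 ∪ A2, g i ^ 2 ≤ 2 * ‖HT g‖ ^ 2 := by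
      have := Finset.sum_union_inter (s₁ := A1) (s₂ := A2) (f := fun i => g i ^ 2)
      have h0 : 0 ≤ ∑ i ∈ A1 ∩ A2, g i ^ 2 := Finset.sum_nonneg (fun i _ => sq_nonneg _)
      linarith
    have e4 : ⟪g, θ - p⟫ = ∑ i ∈ A1 ∪ A2, g i * (θ - p) i := by
      rw [inner_eq_sum]
      symm
      apply Finset.sum_subset (Finset.subset_univ _)
      intro i _ hi
      simp [A1, A2] at hi
      simp [hi.1, hi.2]
    have e5 : ∑ i ∈ A1 ∪ A2, (θ - p) i ^ 2 ≤ ‖θ - p‖ ^ 2 := by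
      rw [norm_sq_eq_sum]
      exact Finset.sum_le_sum_of_subset_of_nonneg (Finset.subset_univ _)
        (fun i _ _ => sq_nonneg _)
    have e6 : ∑ i ∈ A1 ∪ A2, 2 * η * (g i * (θ - p) i) ≤
        ∑ i ∈ A1 ∪ A2, ((θ - p) i ^ 2 + η ^ 2 * g i ^ 2) := by
      apply Finset.sum_le_sum
      intro i _
      nlinarith [sq_nonneg (η * g i - (θ - p) i)]
    rw [← Finset.mul_sum, Finset.sum_add_distrib, ← Finset.mul_sum, ← e4] at e6
    nlinarith [sq_nonneg η]
  have e1 : θ - η • g - p = (θ - p) - η • g := by abel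
  rw [e1, inner_sub_right, inner_smul_right] at h1
  have e2 : 2 * ⟪θstar - p, θ - p⟫ = ‖p - θstar‖ ^ 2 + ‖θ - p‖ ^ 2 - ‖θ - θstar‖ ^ 2 := by
    have e : θ - θstar = (θ - p) - (θstar - p) := by abel
    rw [e, norm_sub_sq_real (θ - p) (θstar - p), norm_sub_rev p θstar,
      real_inner_comm (θstar - p)]
    ring
  have e3 : ⟪θstar - p, g⟫ = ⟪g, θ - p⟫ - ⟪g, θ - θstar⟫ := by
    rw [← inner_sub_right, real_inner_comm]
    congr 1
    abel
  rw [norm_sub_rev θstar p, e3] at h1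
  nlinarith

/-- Sup-norm bound gives a bound on inner products with sparse vectors. -/
lemma sparse_inner {d m : ℕ} (g u : EuclideanSpace ℝ (Fin d)) (l : ℝ) 
    (hg : ∀ i, |g i| ≤ l) (hu : spar u ≤ m) : ⟪g, u⟫ ^ 2 ≤ m * l ^ 2 * ‖u‖ ^ 2 := by
  set A := Finset.univ.filter fun i => u i ≠ 0 with hA
  have e4 : ⟪g, u⟫ = ∑ i ∈ A, g i * u i := by
    rw [inner_eq_sum]
    symm
    apply Finset.sum_subset (Finset.subset_univ _)
    intro i _ hi
    simp [A] at hi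
    simp [hi]
  have h1 := Finset.sum_mul_sq_le_sq_mul_sq A (fun i => g i) (fun i => u i)
  have h2 : ∑ i ∈ A, g i ^ 2 ≤ m * l ^ 2 := by
    calc ∑ i ∈ A, g i ^ 2 ≤ A.card • l ^ 2 := by
          apply Finset.sum_le_card_nsmul
          intro i _
          rw [← sq_abs]
          exact pow_le_pow_left₀ (abs_nonneg _) (hg i) 2
      _ ≤ _ := by
        rw [nsmul_eq_mul]
        gcongr
        exact hu
  have h3 : ∑ i ∈ A, u i ^ 2 ≤ ‖u‖ ^ 2 := by
    rw [norm_sq_eq_sum]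
    exact Finset.sum_le_sum_of_subset_of_nonneg (Finset.subset_univ _)
      (fun i _ _ => sq_nonneg _)
  rw [e4]
  refine h1.trans ?_
  have : 0 ≤ ∑ i ∈ A, u i ^ 2 := Finset.sum_nonneg (fun i _ => sq_nonneg _)
  gcongr

lemma spar_sub {d : ℕ} (a b : EuclideanSpace ℝ (Fin d)) : spar (a - b) ≤ spar a + spar b := by
  unfold spar
  refine le_trans (Finset.card_le_card ?_) (Finset.card_union_le _ _)
  intro i hi
  simp only [Finset.mem_union, Finset.mem_filter, Finset.mem_univ, true_and]
  by_contra hc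
  push Not at hc
  have h2 := (Finset.mem_filter.1 hi).2
  rw [PiLp.sub_apply, hc.1, hc.2, sub_zero] at h2
  exact h2 rfl

lemma ht_spar_inner {d s : ℕ} {HT : EuclideanSpace ℝ (Fin d) → EuclideanSpace ℝ (Fin d)}
    (h : IsHT d s HT) (g : EuclideanSpace ℝ (Fin d)) :
    spar (HT g) ≤ s ∧ ⟪g, HT g⟫ = ‖HT g‖ ^ 2 := by
  obtain ⟨S, hS, h1, h0, hdom⟩ := h g
  constructor
  · unfold spar
    calc _ ≤ S.card := by
          apply Finset.card_le_card
          intro i hi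
          simp at hi
          by_contra hc
          exact hi (h0 i hc)
      _ ≤ s := by rw [hS]; exact min_le_left _ _
  · rw [inner_eq_sum, norm_sq_eq_sum]
    apply Finset.sum_congr rfl
    intro i _
    by_cases hi : i ∈ S
    · rw [h1 i hi]; ring
    · rw [h0 i hi]; ring

/-- Scalar core of the contraction. -/
lemma scalar_core (κ μ L q δ G a2 ip γ p2 η : ℝ) (hμ : 0 < μ) (hκ : κ = L / μ) (hκ1 : 1 ≤ κ)
    (hq : μ * a2 ≤ q) (ha2 : 0 < a2) (hδ : 0.32 * q ≤ δ) (hG0 : 0 < G) 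
    (hG : G ≤ 1.4 * (L * q)) (hip : ip = δ + q / 2) (hη : η = δ / (5 * G))
    (hγ : γ ≤ 1 / (319 * κ))
    (h : (1 - 2 * γ) * p2 ≤ a2 - 2 * η * ip + 2 * η ^ 2 * G) :
    p2 ≤ (1 - 1 / (80 * κ)) * a2 := by
  have hκ0 : 0 < κ := by linarith
  have hL : L = κ * μ := by rw [hκ]; field_simp
  have hL0 : 0 < L := by rw [hL]; positivity
  have hq0 : 0 < q := lt_of_lt_of_le (by positivity) hq
  have hδ0 : 0 < δ := lt_of_lt_of_le (by positivity) hδ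
  have hη0 : 0 < η := by rw [hη]; positivity
  have hηG : η * G = δ / 5 := by rw [hη]; field_simp
  have hηL : 0.32 / 7 ≤ η * L := by
    have : η * G ≤ η * (1.4 * (L * q)) := by gcongr
    rw [hηG] at this
    have h2 : 0.32 / 7 * (7 * q) ≤ η * L * (7 * q) := by nlinarith
    exact le_of_mul_le_mul_right h2 (by positivity)
  have h1 : (1 - 2 * γ) * p2 ≤ a2 - η * (1.6 * δ + q) := by
    have : 2 * η ^ 2 * G = 2 * η * (δ / 5) := by rw [← hηG]; ring
    rw [this, hip] at h
    linarith
  have h2 : 0.069 * a2 / κ ≤ η * (1.6 * δ + q) := by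
    have : 1.512 * q ≤ 1.6 * δ + q := by linarith
    have h3 : η * (1.512 * (μ * a2)) ≤ η * (1.6 * δ + q) := by
      gcongr; linarith
    have h4 : 0.069 * a2 / κ ≤ η * (1.512 * (μ * a2)) := by
      rw [div_le_iff₀ hκ0]
      have : η * (1.512 * (μ * a2)) * κ = 1.512 * a2 * (η * L) := by rw [hL]; ring
      rw [this]
      nlinarith
    linarith
  have hx : 0 < 1 / κ := by positivity
  set x := 1 / κ with hxd
  have hx1 : x ≤ 1 := by rw [hxd, div_le_one hκ0]; exact hκ1
  have e1 : 1 / (319 * κ) = x / 319 := by rw [hxd]; field_simp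
  have e2 : 1 / (80 * κ) = x / 80 := by rw [hxd]; field_simp
  have e3 : 0.069 * a2 / κ = 0.069 * a2 * x := by rw [hxd]; field_simp
  rw [e1] at hγ
  rw [e2]
  rw [e3] at h2
  have h5 : (1 - 2 * γ) * p2 ≤ (1 - 2 * γ) * ((1 - x / 80) * a2) := by
    refine (h1.trans (sub_le_sub_left h2 _)).trans ?_
    have : (1 - x / 150) * ((1 - x / 80) * a2) ≤ (1 - 2 * γ) * ((1 - x / 80) * a2) := by
      apply mul_le_mul_of_nonneg_right
      · linarith
      · apply mul_nonneg _ ha2.le; linarith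
    refine le_trans ?_ this
    have : 0 ≤ a2 * x := by positivity
    nlinarith [mul_pos ha2 (mul_pos hx hx)]
  exact le_of_mul_le_mul_left h5 (by linarith)

set_option maxHeartbeats 1000000 in
/-- Deterministic part of the theorem. -/
lemma det_main {d s k : ℕ} {HT RT : EuclideanSpace ℝ (Fin d) → EuclideanSpace ℝ (Fin d)}
    {W : Type*} [NormedAddCommGroup W] [InnerProductSpace ℝ W] [CompleteSpace W]
    (hHT : IsHT d s HT) (hRT : IsRT d s RT) (hk : 1 ≤ k) (hks : k < s) (hsd : s < d)
    (A : EuclideanSpace ℝ (Fin d) →L[ℝ] W) (e : W) (n : ℝ) (hn : 0 < n)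
    (θstar : EuclideanSpace ℝ (Fin d)) (hstar : spar θstar ≤ k)
    (f : EuclideanSpace ℝ (Fin d) → ℝ)
    (hf : f = fun θ => 1 / (2 * n) * ‖A θstar + e - A θ‖ ^ 2)
    (μ L κ l R : ℝ) (hμ : 0 < μ) (hκ : κ = L / μ) (hκ1 : 1 ≤ κ) (hs : (s : ℝ) ≥ 320 * κ * k)
    (hR0 : 0 < R) (hl : 32 * s * l ^ 2 ≤ μ ^ 2 * R)
    (hE1 : ∀ u : EuclideanSpace ℝ (Fin d), spar u ≤ 2 * s →
      μ * ‖u‖ ^ 2 ≤ 1 / n * ‖A u‖ ^ 2 ∧ 1 / n * ‖A u‖ ^ 2 ≤ L * ‖u‖ ^ 2)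
    (hE2 : ∀ i, |1 / n * ⟪e, A (EuclideanSpace.single i 1)⟫| ≤ l)
    (θ : ℕ → EuclideanSpace ℝ (Fin d)) (h0 : spar (θ 0) ≤ s)
    (hrec : ∀ t, θ (t + 1) =
      RT (θ t - (max (f (θ t) - f θstar) 0 /
        (5 * ‖HT (gradient f (θ t))‖ ^ 2)) • gradient f (θ t))) :
    (∀ t, ‖θ t - θstar‖ ^ 2 ≥ R →
      ‖θ (t + 1) - θstar‖ ^ 2 ≤ (1 - 1 / (80 * κ)) * ‖θ t - θstar‖ ^ 2) ∧
    (∀ T, ‖θ T - θstar‖ ^ 2 < R →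
      ∀ t, T ≤ t → ‖θ t - θstar‖ ^ 2 ≤ (1 + 1 / (80 * κ)) * R) := by
  have hsp : ∀ t, spar (θ t) ≤ s := by
    intro t
    cases t with
    | zero => exact h0
    | succ t => rw [hrec]; exact rt_spar hRT _
  have hκ0 : 0 < κ := by linarith
  have hL : L = κ * μ := by rw [hκ]; field_simp
  have hL0 : 0 < L := by rw [hL]; positivity
  have hk0 : (1 : ℝ) ≤ k := by exact_mod_cast hk
  have hks' : (k : ℝ) < s := by exact_mod_cast hks
  have hγ0 : 0 ≤ (k / (s - k : ℝ)) := div_nonneg (by linarith) (by linarith)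
  have hγ : (k / (s - k : ℝ)) ≤ 1 / (319 * κ) := by
    rw [div_le_div_iff₀ (by linarith) (by positivity)]
    nlinarith
  set γ := (k / (s - k : ℝ)) with hγd
  have hgr : ∀ x h, ⟪gradient f x, h⟫ = 1 / n * ⟪A (x - θstar) - e, A h⟫ := by
    intro x h
    rw [hf, grad_ls]
    congr 2
    rw [map_sub]; abel
  have hfd : ∀ x, f x - f θstar = 1 / n * ‖A (x - θstar)‖ ^ 2 / 2 - 1 / n * ⟪e, A (x - θstar)⟫ := by
    intro x
    rw [hf]
    have e1 : A θstar + e - A x = e - A (x - θstar) := by rw [map_sub]; abel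
    simp only [e1]
    rw [norm_sub_sq_real]
    simp
    field_simp
    ring
  have hip : ∀ x, ⟪gradient f x, x - θstar⟫ = (f x - f θstar) + 1 / n * ‖A (x - θstar)‖ ^ 2 / 2 := by
    intro x
    rw [hfd, hgr, inner_sub_left, real_inner_self_eq_norm_sq]
    ring
  have hstep : ∀ t, (1 - 2 * γ) * ‖θ (t + 1) - θstar‖ ^ 2 ≤
      ‖θ t - θstar‖ ^ 2 - 2 * (max (f (θ t) - f θstar) 0 /
        (5 * ‖HT (gradient f (θ t))‖ ^ 2)) * ⟪gradient f (θ t), θ t - θstar⟫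
      + 2 * (max (f (θ t) - f θstar) 0 /
        (5 * ‖HT (gradient f (θ t))‖ ^ 2)) ^ 2 * ‖HT (gradient f (θ t))‖ ^ 2 := by
    intro t
    rw [hrec t]
    exact step_basic hHT hRT hk hks hsd _ _ _ _ hstar (hsp t)
  obtain ⟨gs, hgs⟩ : ∃ gs : EuclideanSpace ℝ (Fin d), ∀ h, ⟪gs, h⟫ = 1 / n * ⟪e, A h⟫ := by
    refine ⟨-gradient f θstar, fun h => ?_⟩
    rw [inner_neg_left, hgr]
    simp
  have hgsl : ∀ i, |gs i| ≤ l := by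
    intro i
    have := hE2 i
    rw [← hgs, EuclideanSpace.inner_single_right] at this
    simpa using this
  have part1 : ∀ t, ‖θ t - θstar‖ ^ 2 ≥ R →
      ‖θ (t + 1) - θstar‖ ^ 2 ≤ (1 - 1 / (80 * κ)) * ‖θ t - θstar‖ ^ 2 := by
    intro t ht
    have hst := hstep t
    set x := θ t
    set g := gradient f x with hg
    set a := ‖x - θstar‖ with ha
    have ha0 : 0 < a := by
      have : 0 < a ^ 2 := by linarith
      exact (sq_pos_iff.1 this).lt_of_le' (norm_nonneg _)
    set q := 1 / n * ‖A (x - θstar)‖ ^ 2 with hq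
    have hsps : spar (x - θstar) ≤ s + k := by
      exact (spar_sub x θstar).trans (add_le_add (hsp t) hstar)
    have hqa := (hE1 (x - θstar) (by omega)).1
    rw [← hq, ← ha] at hqa
    have hq0 : 0 < q := lt_of_lt_of_le (by positivity) hqa
    have hn1 : (⟪gs, x - θstar⟫ : ℝ) ≤ 0.18 * q := by
      have h1 := sparse_inner gs (x - θstar) l hgsl hsps
      have h2 : ((s + k : ℕ) : ℝ) ≤ 321 / 320 * s := by
        push_cast
        nlinarith
      have h3 : ((s + k : ℕ) : ℝ) * l ^ 2 ≤ 321 / 320 * s * l ^ 2 := by gcongr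
      have h4 : ⟪gs, x - θstar⟫ ^ 2 ≤ (0.18 * (μ * a ^ 2)) ^ 2 := by
        calc ⟪gs, x - θstar⟫ ^ 2 ≤ ((s + k : ℕ) : ℝ) * l ^ 2 * a ^ 2 := h1
          _ ≤ (321 / 320 * s * l ^ 2) * a ^ 2 := by gcongr
          _ ≤ (0.0324 * (μ ^ 2 * R)) * a ^ 2 := by
            apply mul_le_mul_of_nonneg_right _ (sq_nonneg _)
            have : 0 ≤ μ ^ 2 * R := by positivity
            linarith
          _ ≤ (0.0324 * (μ ^ 2 * a ^ 2)) * a ^ 2 := by gcongr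
          _ = _ := by ring
      have h5 := (abs_le_of_sq_le_sq' h4 (by positivity)).2
      linarith
    have hδ : 0.32 * q ≤ f x - f θstar := by
      rw [hfd, ← hq, ← hgs]; linarith
    have hδ0 : 0 < f x - f θstar := by linarith
    have hgne : g ≠ 0 := by
      intro h
      have := hip x
      rw [← hg, h, inner_zero_left, ← hq] at this
      linarith
    have hG0 : 0 < ‖HT g‖ := by
      rw [norm_pos_iff]
      intro h
      apply hgne
      ext i
      have := ht_energy hHT hsd g {i} (by simp; omega)
      rw [h] at this
      simp at this
      have h2 := sq_nonneg (g i)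
      simpa using this
    have hG : ‖HT g‖ ^ 2 ≤ 1.4 * (L * q) := by
      obtain ⟨u1, u2⟩ := ht_spar_inner hHT g
      set u := HT g
      have b1 : ⟪g, u⟫ = 1 / n * ⟪A (x - θstar), A u⟫ - ⟪gs, u⟫ := by
        rw [hg, hgr, hgs, inner_sub_left]; ring
      have b2 : -⟪gs, u⟫ ≤ 0.18 * (μ * a) * ‖u‖ := by
        have h1 := sparse_inner gs u l hgsl u1
        have h4 : (-⟪gs, u⟫) ^ 2 ≤ (0.18 * (μ * a) * ‖u‖) ^ 2 := by
          rw [neg_sq]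
          calc ⟪gs, u⟫ ^ 2 ≤ (s : ℝ) * l ^ 2 * ‖u‖ ^ 2 := h1
            _ ≤ (0.0324 * (μ ^ 2 * R)) * ‖u‖ ^ 2 := by
              apply mul_le_mul_of_nonneg_right _ (sq_nonneg _)
              have : 0 ≤ μ ^ 2 * R := by positivity
              linarith
            _ ≤ (0.0324 * (μ ^ 2 * a ^ 2)) * ‖u‖ ^ 2 := by gcongr
            _ = _ := by ring
        exact (abs_le_of_sq_le_sq' h4 (by positivity)).2
      have b3 : μ * a ≤ Real.sqrt (L * q) := by
        apply Real.le_sqrt_of_sq_le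
        have : μ * (μ * a ^ 2) ≤ L * q := by
          apply mul_le_mul _ hqa (by positivity) hL0.le
          rw [hL]; nlinarith
        nlinarith
      have b4 : 1 / n * ⟪A (x - θstar), A u⟫ ≤ Real.sqrt (L * q) * ‖u‖ := by
        have c1 := real_inner_le_norm (A (x - θstar)) (A u)
        have c2 := (hE1 u (by omega)).2
        have c3 : 1 / n * (‖A (x - θstar)‖ * ‖A u‖) ≤ Real.sqrt (L * q) * ‖u‖ := by
          apply abs_le_of_sq_le_sq' _ (by positivity) |>.2
          rw [mul_pow (Real.sqrt _), Real.sq_sqrt (by positivity)]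
          calc (1 / n * (‖A (x - θstar)‖ * ‖A u‖)) ^ 2 = q * (1 / n * ‖A u‖ ^ 2) := by
                rw [hq]; ring
            _ ≤ q * (L * ‖u‖ ^ 2) := by gcongr
            _ = _ := by ring
        refine le_trans ?_ c3
        gcongr
      have b5 : ‖u‖ * ‖u‖ ≤ (1.18 * Real.sqrt (L * q)) * ‖u‖ := by
        have : ‖u‖ * ‖u‖ = ‖u‖ ^ 2 := by ring
        rw [this, ← u2, b1]
        have : 0.18 * (μ * a) * ‖u‖ ≤ 0.18 * Real.sqrt (L * q) * ‖u‖ := by gcongr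
        linarith
      have b6 := le_of_mul_le_mul_right b5 hG0
      calc ‖u‖ ^ 2 ≤ (1.18 * Real.sqrt (L * q)) ^ 2 := by gcongr
        _ = 1.3924 * (L * q) := by rw [mul_pow, Real.sq_sqrt (by positivity)]; norm_num
        _ ≤ _ := by
          have : 0 ≤ L * q := by positivity
          linarith
    rw [max_eq_left hδ0.le] at hst
    exact scalar_core κ μ L q (f x - f θstar) (‖HT g‖ ^ 2) (a ^ 2) ⟪g, x - θstar⟫ γ _ _ hμ hκ hκ1
      hqa (by positivity) hδ (by positivity) hG (hip x) rfl hγ hst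
  refine ⟨part1, ?_⟩
  have hxp : 0 < 1 / κ := by positivity
  have hx1 : 1 / κ ≤ 1 := by rw [div_le_one hκ0]; exact hκ1
  have e1 : 1 / (319 * κ) = (1 / κ) / 319 := by field_simp
  have e2 : 1 / (80 * κ) = (1 / κ) / 80 := by field_simp
  have part2 : ∀ t, ‖θ t - θstar‖ ^ 2 < R → ‖θ (t + 1) - θstar‖ ^ 2 ≤ (1 + 1 / (80 * κ)) * R := by
    intro t ht
    have hst := hstep t
    set x := θ t
    set g := gradient f x with hg
    have hq0 : 0 ≤ 1 / n * ‖A (x - θstar)‖ ^ 2 := by positivity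
    have hdec : (1 - 2 * γ) * ‖θ (t + 1) - θstar‖ ^ 2 ≤ ‖x - θstar‖ ^ 2 := by
      refine hst.trans ?_
      have hipx := hip x
      rw [← hg] at hipx
      rcases le_total (f x - f θstar) 0 with h | h
      · rw [max_eq_right h]; simp
      · rw [max_eq_left h]
        set δ := f x - f θstar
        by_cases hG : ‖HT g‖ = 0
        · simp [hG]
        · have hGp : 0 < ‖HT g‖ := lt_of_le_of_ne (norm_nonneg _) (Ne.symm hG)
          set η := δ / (5 * ‖HT g‖ ^ 2) with hη
          have hη0 : 0 ≤ η := by positivity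
          have : 2 * η ^ 2 * ‖HT g‖ ^ 2 = 2 * η * (δ / 5) := by rw [hη]; field_simp
          rw [this]
          have : 2 * η * (δ / 5) ≤ 2 * η * ⟪g, x - θstar⟫ := by
            gcongr
            rw [hipx]; linarith
          linarith
    rw [e2]
    rw [e1] at hγ
    set y := 1 / κ
    have hγ2 : 0 < 1 - 2 * γ := by linarith
    have : (1 - 2 * γ) * ‖θ (t + 1) - θstar‖ ^ 2 ≤ (1 - 2 * γ) * ((1 + y / 80) * R) := by
      have h1 : 1 ≤ (1 - 2 * γ) * (1 + y / 80) := by nlinarith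
      nlinarith
    exact le_of_mul_le_mul_left this hγ2
  intro T hT t ht
  induction t, ht using Nat.le_induction with
  | base =>
    refine hT.le.trans ?_
    rw [e2]; nlinarith
  | succ t _ ih =>
    rcases lt_or_ge (‖θ t - θstar‖ ^ 2) R with h | h
    · exact part2 t h
    · refine (part1 t h).trans (le_trans ?_ ih)
      rw [e2]
      nlinarith [sq_nonneg ‖θ t - θstar‖]

lemma gauss_sq_integrable (l : ℝ) (hl : l ≤ 1 / 4) :
    Integrable (fun x : ℝ => Real.exp (l * x ^ 2)) (gaussianReal 0 1) := by
  rw [gaussianReal_of_var_ne_zero _ one_ne_zero]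
  rw [integrable_withDensity_iff_integrable_smul₀' (by fun_prop)
    (ae_of_all _ fun _ ↦ gaussianPDF_lt_top)]
  have h := (integrable_exp_neg_mul_sq (b := 1 / 2 - l) (by linarith)).const_mul
    ((Real.sqrt (2 * Real.pi))⁻¹)
  refine h.congr (ae_of_all _ fun x => ?_)
  simp only [toReal_gaussianPDF, smul_eq_mul, gaussianPDFReal]
  simp only [NNReal.coe_one, mul_one, sub_zero, mul_assoc]
  rw [← Real.exp_add]
  congr 2
  ring

lemma gauss_sq_mgf (l : ℝ) (hl : |l| ≤ 1 / 4) :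
    ∫ x : ℝ, Real.exp (l * x ^ 2) ∂(gaussianReal 0 1) ≤ Real.exp (l + 2 * l ^ 2) := by
  obtain ⟨hl1, hl2⟩ := abs_le.1 hl
  rw [integral_gaussianReal_eq_integral_smul one_ne_zero]
  have e : ∀ x : ℝ, gaussianPDFReal 0 1 x • Real.exp (l * x ^ 2) =
      (Real.sqrt (2 * Real.pi))⁻¹ * Real.exp (-(1 / 2 - l) * x ^ 2) := by
    intro x
    simp only [smul_eq_mul, gaussianPDFReal]
    simp only [NNReal.coe_one, mul_one, sub_zero, mul_assoc]
    rw [← Real.exp_add]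
    congr 2
    ring
  simp_rw [e]
  rw [integral_const_mul, integral_gaussian, ← Real.sqrt_inv, ← Real.sqrt_mul (by positivity)]
  have hp := Real.pi_pos
  have hb : 0 < 1 - 2 * l := by linarith
  have e2 : (2 * Real.pi)⁻¹ * (Real.pi / (1 / 2 - l)) = (1 - 2 * l)⁻¹ := by
    have : 1 / 2 - l = (1 - 2 * l) / 2 := by ring
    rw [this]
    field_simp
  rw [e2, Real.sqrt_le_left (Real.exp_pos _).le, ← Real.exp_nat_mul]
  rw [inv_le_comm₀ hb (Real.exp_pos _), ← Real.exp_neg]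
  set x := 2 * l with hx
  have e3 : -(((2 : ℕ) : ℝ) * (l + 2 * l ^ 2)) = -(x + x ^ 2) := by rw [hx]; push_cast; ring
  rw [e3, Real.exp_neg, inv_le_comm₀ (Real.exp_pos _) hb]
  have h3 : (1 - x)⁻¹ ≤ Real.exp (x + x ^ 2) := by
    have hxa : -(1 / 2) ≤ x := by rw [hx]; linarith
    have hxb : x ≤ 1 / 2 := by rw [hx]; linarith
    rcases le_total 0 x with h | h
    · have := Real.quadratic_le_exp_of_nonneg (x := x + x ^ 2) (by positivity)
      refine le_trans ?_ this
      rw [inv_le_iff_one_le_mul₀ hb]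
      nlinarith [mul_nonneg h h, mul_nonneg (mul_nonneg h h) h,
        mul_nonneg (mul_nonneg h h) (sub_nonneg.2 hxb),
        mul_nonneg (mul_nonneg (mul_nonneg h h) h) (sub_nonneg.2 hxb),
        mul_nonneg (mul_nonneg (mul_nonneg h h) (mul_nonneg h h)) (sub_nonneg.2 hxb)]
    · have := Real.add_one_le_exp (x + x ^ 2)
      refine le_trans ?_ this
      rw [inv_le_iff_one_le_mul₀ hb]
      nlinarith [mul_nonneg (neg_nonneg.2 h) (mul_nonneg (neg_nonneg.2 h) (neg_nonneg.2 h))]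
  exact h3

lemma chi_mgf (n : ℕ) (l : ℝ) (hl : |l| ≤ 1 / 4) :
    Integrable (fun y : Fin n → ℝ => Real.exp (l * ∑ i, y i ^ 2))
      (Measure.pi fun _ : Fin n => gaussianReal 0 1) ∧
    mgf (fun y : Fin n → ℝ => ∑ i, y i ^ 2) (Measure.pi fun _ : Fin n => gaussianReal 0 1) l ≤
      Real.exp (n * (l + 2 * l ^ 2)) := by
  have e : (fun y : Fin n → ℝ => Real.exp (l * ∑ i, y i ^ 2)) =
      fun y => ∏ i, Real.exp (l * (y i) ^ 2) := by
    funext y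
    rw [Finset.mul_sum, Real.exp_sum]
  constructor
  · rw [e]
    exact Integrable.fintype_prod (f := fun _ (x : ℝ) => Real.exp (l * x ^ 2))
      (fun i => gauss_sq_integrable l (abs_le.1 hl).2)
  · unfold mgf
    rw [e, integral_fintype_prod_eq_prod (f := fun _ (x : ℝ) => Real.exp (l * x ^ 2)),
      Real.exp_nat_mul]
    simp only [Finset.prod_const, Finset.card_univ, Fintype.card_fin]
    apply pow_le_pow_left₀ (integral_nonneg fun x => (Real.exp_pos _).le)
    exact gauss_sq_mgf l hl

lemma chi_tail (n : ℕ) (t : ℝ) (h0 : 0 ≤ t) (h1 : t ≤ 1) :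
    (Measure.pi fun _ : Fin n => gaussianReal 0 1).real
      {y : Fin n → ℝ | n * t < |∑ i, y i ^ 2 - n|} ≤ 2 * Real.exp (-(n * t ^ 2 / 8)) := by
  set P := (Measure.pi fun _ : Fin n => gaussianReal 0 1)
  have hsub : {y : Fin n → ℝ | n * t < |∑ i, y i ^ 2 - n|} ⊆
      {y | (n * (1 + t) : ℝ) ≤ ∑ i, y i ^ 2} ∪ {y | ∑ i, y i ^ 2 ≤ (n * (1 - t) : ℝ)} := by
    intro y hy
    simp only [Set.mem_ofPred_eq, lt_abs] at hy
    rcases hy with hy | hy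
    · left; simp only [Set.mem_ofPred_eq]; linarith
    · right; simp only [Set.mem_ofPred_eq]; linarith
  have ha : |t / 4| ≤ 1 / 4 := by rw [abs_le]; constructor <;> linarith
  have hb : |-(t / 4)| ≤ 1 / 4 := by rwa [abs_neg]
  have u1 := measure_ge_le_exp_mul_mgf (μ := P) (X := fun y : Fin n → ℝ => ∑ i, y i ^ 2)
    (t := t / 4) (n * (1 + t)) (by positivity) (chi_mgf n _ ha).1
  have u2 := measure_le_le_exp_mul_mgf (μ := P) (X := fun y : Fin n → ℝ => ∑ i, y i ^ 2)
    (t := -(t / 4)) (n * (1 - t)) (by linarith) (chi_mgf n _ hb).1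
  have v1 := (chi_mgf n _ ha).2
  have v2 := (chi_mgf n _ hb).2
  have w1 : Real.exp (-(t / 4) * (n * (1 + t))) * Real.exp (n * (t / 4 + 2 * (t / 4) ^ 2))
      = Real.exp (-(n * t ^ 2 / 8)) := by
    rw [← Real.exp_add]; congr 1; ring
  have w2 : Real.exp (-(-(t / 4)) * (n * (1 - t))) *
      Real.exp (n * (-(t / 4) + 2 * (-(t / 4)) ^ 2)) = Real.exp (-(n * t ^ 2 / 8)) := by
    rw [← Real.exp_add]; congr 1; ring
  have x1 : P.real {y | (n * (1 + t) : ℝ) ≤ ∑ i, y i ^ 2} ≤ Real.exp (-(n * t ^ 2 / 8)) := by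
    refine u1.trans ?_
    rw [← w1]
    gcongr
  have x2 : P.real {y | ∑ i, y i ^ 2 ≤ (n * (1 - t) : ℝ)} ≤ Real.exp (-(n * t ^ 2 / 8)) := by
    refine u2.trans ?_
    rw [← w2]
    gcongr
  calc _ ≤ P.real ({y | (n * (1 + t) : ℝ) ≤ ∑ i, y i ^ 2} ∪
        {y | ∑ i, y i ^ 2 ≤ (n * (1 - t) : ℝ)}) := measureReal_mono hsub
    _ ≤ _ := measureReal_union_le _ _
    _ ≤ _ := by linarith

lemma sum_gauss {d : ℕ} (v : Fin d → ℝ) :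
    (Measure.pi fun _ : Fin d => gaussianReal 0 1).map (fun x => ∑ j, x j * v j) =
      gaussianReal 0 (∑ j, Real.toNNReal (v j ^ 2)) := by
  refine Measure.ext_of_charFun ?_
  ext t
  rw [charFun_gaussianReal, charFun_apply_real, integral_map (Measurable.aemeasurable (by fun_prop)) (by fun_prop)]
  have e : ∀ x : Fin d → ℝ, Complex.exp (t * (∑ j, x j * v j : ℝ) * Complex.I) =
      ∏ j, Complex.exp (((t * v j : ℝ) : ℂ) * x j * Complex.I) := by
    intro x
    rw [← Complex.exp_sum]
    congr 1
    push_cast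
    rw [Finset.mul_sum, Finset.sum_mul]
    exact Finset.sum_congr rfl (fun _ _ => by ring)
  simp_rw [e]
  rw [integral_fintype_prod_eq_prod
    (f := fun j (x : ℝ) => Complex.exp (((t * v j : ℝ) : ℂ) * x * Complex.I))]
  have e2 : ∀ j, ∫ x : ℝ, Complex.exp (((t * v j : ℝ) : ℂ) * x * Complex.I) ∂(gaussianReal 0 1)
      = Complex.exp (-((v j ^ 2 : ℝ) : ℂ) * t ^ 2 / 2) := by
    intro j
    rw [← charFun_apply_real, charFun_gaussianReal]
    congr 1
    push_cast
    simp
    ring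
  simp_rw [e2]
  rw [← Complex.exp_sum]
  congr 1
  push_cast
  simp only [Real.coe_toNNReal _ (sq_nonneg _)]
  rw [← Finset.sum_div, ← Finset.sum_mul]
  push_cast
  simp
  ring

/-- The joint Gaussian law. -/
abbrev PP (n d : ℕ) : Measure ((Fin n → Fin d → ℝ) × (Fin n → ℝ)) :=
  ((Measure.pi fun _ : Fin n => Measure.pi fun _ : Fin d => gaussianReal 0 1).prod
    (Measure.pi fun _ : Fin n => gaussianReal 0 1))

lemma row_law {n d : ℕ} (v : Fin d → ℝ) (b : ℝ) (hv : ∑ j, v j ^ 2 + b ^ 2 = 1) :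
    (PP n d).map (fun ω i => ∑ j, ω.1 i j * v j + b * ω.2 i) =
      Measure.pi fun _ : Fin n => gaussianReal 0 1 := by
  have h1 := (measurePreserving_arrowProdEquivProdArrow (Fin d → ℝ) ℝ (Fin n)
    (fun _ => Measure.pi fun _ : Fin d => gaussianReal 0 1) (fun _ => gaussianReal 0 1)).map_eq
  unfold PP
  rw [← h1, Measure.map_map (by fun_prop) (MeasurableEquiv.measurable _)]
  have e : ((fun (ω : (Fin n → Fin d → ℝ) × (Fin n → ℝ)) i => ∑ j, ω.1 i j * v j + b * ω.2 i) ∘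
      (MeasurableEquiv.arrowProdEquivProdArrow (Fin d → ℝ) ℝ (Fin n))) =
      fun (x : Fin n → (Fin d → ℝ) × ℝ) i => 
        (fun p : (Fin d → ℝ) × ℝ => ∑ j, p.1 j * v j + b * p.2) (x i) := by
    funext x i
    rfl
  rw [e, Measure.pi_map_pi (f := fun _ (p : (Fin d → ℝ) × ℝ) => ∑ j, p.1 j * v j + b * p.2)
    (μ := fun _ => (Measure.pi fun _ : Fin d => gaussianReal 0 1).prod (gaussianReal 0 1))
    (fun i => Measurable.aemeasurable (by fun_prop))]
  congr 1
  funext i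
  have e2 : (fun p : (Fin d → ℝ) × ℝ => ∑ j, p.1 j * v j + b * p.2) =
      (fun p : ℝ × ℝ => p.1 + p.2) ∘
        (Prod.map (fun x : Fin d → ℝ => ∑ j, x j * v j) (fun y : ℝ => b * y)) := rfl
  rw [e2, ← Measure.map_map (by fun_prop) (by fun_prop),
    ← Measure.map_prod_map _ _ (by fun_prop) (by fun_prop), sum_gauss, gaussianReal_map_const_mul]
  change (gaussianReal _ _) ∗ (gaussianReal _ _) = _
  rw [gaussianReal_conv_gaussianReal]
  congr 1
  · simp
  · ext
    push_cast
    simp only [Real.coe_toNNReal _ (sq_nonneg _)]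
    simp
    exact hv

lemma row_tail {n d : ℕ} (v : Fin d → ℝ) (b t : ℝ) (h0 : 0 ≤ t) (h1 : t ≤ 1) :
    (PP n d).real {ω | n * t * (∑ j, v j ^ 2 + b ^ 2) <
      |∑ i, (∑ j, ω.1 i j * v j + b * ω.2 i) ^ 2 - n * (∑ j, v j ^ 2 + b ^ 2)|} ≤
      2 * Real.exp (-(n * t ^ 2 / 8)) := by
  set r2 := ∑ j, v j ^ 2 + b ^ 2 with hr2
  have hs : 0 ≤ ∑ j, v j ^ 2 := Finset.sum_nonneg (fun i _ => sq_nonneg _)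
  have hr0 : 0 ≤ r2 := by positivity
  rcases hr0.eq_or_lt with h | h
  · have hb : b = 0 := by
      have : b ^ 2 = 0 := by nlinarith [sq_nonneg b]
      exact pow_eq_zero_iff two_ne_zero |>.1 this
    have hv : ∀ j, v j = 0 := by
      have : ∑ j, v j ^ 2 = 0 := by nlinarith [sq_nonneg b]
      intro j
      have := (Finset.sum_eq_zero_iff_of_nonneg (fun i _ => sq_nonneg _)).1 this j (Finset.mem_univ _)
      exact pow_eq_zero_iff two_ne_zero |>.1 this
    simp [← h, hb, hv]
    positivity
  · have hr : 0 < Real.sqrt r2 := Real.sqrt_pos.2 h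
    have hrr : Real.sqrt r2 ^ 2 = r2 := Real.sq_sqrt h.le
    set r := Real.sqrt r2
    have hl := row_law (n := n) (fun j => v j / r) (b / r) (by
      simp_rw [div_pow]
      rw [← Finset.sum_div, ← add_div, hrr, ← hr2, div_self h.ne'])
    have ht := chi_tail n t h0 h1
    rw [← hl, map_measureReal_apply (by fun_prop) (measurableSet_lt (by fun_prop) (by fun_prop))] at ht
    refine le_trans (le_of_eq ?_) ht
    congr 1
    ext ω
    simp only [Set.mem_ofPred_eq, Set.mem_preimage]
    have e : ∑ i, (∑ j, ω.1 i j * v j + b * ω.2 i) ^ 2 =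
        (∑ i, (∑ j, ω.1 i j * (v j / r) + b / r * ω.2 i) ^ 2) * r2 := by
      rw [Finset.sum_mul]
      apply Finset.sum_congr rfl
      intro i _
      have : ∑ j, ω.1 i j * (v j / r) = (∑ j, ω.1 i j * v j) / r := by
        rw [Finset.sum_div]
        exact Finset.sum_congr rfl (fun _ _ => by ring)
      rw [this, ← hrr]
      field_simp
    rw [e, ← sub_mul, abs_mul, abs_of_pos h]
    exact mul_lt_mul_iff_left₀ h

/-- A grid net for sparse vectors. -/
def gnet (d M : ℕ) : ℕ → Finset (Fin d → ℝ)
  | 0 => {0}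
  | k + 1 => Finset.image₂ (fun (u : Fin d → ℝ) (p : Fin d × ℤ) =>
      u + Pi.single p.1 ((p.2 : ℝ) / M)) (gnet d M k)
      (Finset.univ ×ˢ Finset.Icc (-(M : ℤ)) M)

lemma gnet_card (d M k : ℕ) : (gnet d M k).card ≤ (d * (2 * M + 1)) ^ k := by
  induction k with
  | zero => simp [gnet]
  | succ k ih =>
    rw [gnet, pow_succ]
    refine (Finset.card_image₂_le _ _ _).trans ?_
    gcongr
    rw [Finset.card_product]
    simp
    apply le_of_eq
    congr 1
    omega

lemma gnet_cover (d M : ℕ) (hd : 0 < d) (hM : 0 < M) (k : ℕ) :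
    ∀ v : Fin d → ℝ, (∀ j, |v j| ≤ 1) → (Finset.univ.filter fun j => v j ≠ 0).card ≤ k →
    ∃ u ∈ gnet d M k, ∀ j, |v j - u j| ≤ 1 / M ∧ (v j = 0 → u j = 0) := by
  have hM' : (0 : ℝ) < M := by exact_mod_cast hM
  induction k with
  | zero =>
    intro v _ hc
    refine ⟨0, by simp [gnet], fun j => ?_⟩
    have hv : v j = 0 := by
      by_contra h
      have : j ∈ (Finset.univ.filter fun j => v j ≠ 0) := by simp [h]
      rw [Finset.card_eq_zero.1 (Nat.le_zero.1 hc)] at this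
      simp at this
    simp [hv]
  | succ k ih =>
    intro v hv hc
    by_cases h : ∃ j, v j ≠ 0
    · obtain ⟨j, hj⟩ := h
      obtain ⟨u, hu, hu2⟩ := ih (Function.update v j 0) (by
        intro i
        by_cases hi : i = j
        · subst hi; simp
        · simp [Function.update_of_ne hi, hv i]) (by
        have : (Finset.univ.filter fun i => Function.update v j 0 i ≠ 0) ⊆
            (Finset.univ.filter fun i => v i ≠ 0).erase j := by
          intro i hi
          have hi := (Finset.mem_filter.1 hi).2
          by_cases hij : i = j
          · subst hij; simp at hi
          · rw [Function.update_of_ne hij] at hi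
            simp [hij, hi]
        have h1 := Finset.card_le_card this
        rw [Finset.card_erase_of_mem (by simp [hj])] at h1
        omega)
      refine ⟨u + Pi.single j ((⌊v j * M⌋ : ℝ) / M), ?_, ?_⟩
      · rw [gnet]
        refine Finset.mem_image₂.2 ⟨u, hu, (j, ⌊v j * M⌋), ?_, rfl⟩
        simp only [Finset.mem_product, Finset.mem_univ, true_and, Finset.mem_Icc]
        obtain ⟨a1, a2⟩ := abs_le.1 (hv j)
        constructor
        · rw [Int.le_floor]; push_cast; nlinarith
        · have : ((⌊v j * M⌋ : ℤ) : ℝ) ≤ M := (Int.floor_le _).trans (by nlinarith)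
          exact_mod_cast this
      · intro i
        by_cases hij : i = j
        · subst hij
          have h0 := (hu2 i).2 (by simp)
          refine ⟨?_, fun h => absurd h hj⟩
          simp only [Pi.add_apply, h0, Pi.single_eq_same, zero_add]
          have f1 := Int.floor_le (v i * M)
          have f2 := Int.lt_floor_add_one (v i * M)
          have e : v i - (⌊v i * M⌋ : ℝ) / M = (v i * M - ⌊v i * M⌋) / M := by field_simp
          rw [e, abs_of_nonneg (div_nonneg (by linarith) hM'.le)]
          gcongr
          linarith
        · have h0 := hu2 i
          rw [Function.update_of_ne hij] at h0
          simpa [Pi.single_eq_of_ne hij] using h0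
    · push Not at h
      obtain ⟨u, hu, hu2⟩ := ih v hv (by simp [h])
      refine ⟨u + Pi.single ⟨0, hd⟩ (((0 : ℤ) : ℝ) / M), ?_, ?_⟩
      · rw [gnet]
        exact Finset.mem_image₂.2 ⟨u, hu, (⟨0, hd⟩, 0), by simp, rfl⟩
      · intro i
        simpa using hu2 i

lemma lin_small {d : ℕ} {W : Type*} [NormedAddCommGroup W] [InnerProductSpace ℝ W]
    (A : EuclideanSpace ℝ (Fin d) →ₗ[ℝ] W) (h : EuclideanSpace ℝ (Fin d)) (ε c : ℝ)
    (hε : ∀ j, |h j| ≤ ε) (hA : ∀ j, ‖A (EuclideanSpace.single j 1)‖ ≤ c) :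
    ‖A h‖ ≤ d * (ε * c) := by
  have e : h = ∑ j, h j • (EuclideanSpace.single j 1 : EuclideanSpace ℝ (Fin d)) := by
    ext i
    simp [Finset.sum_apply, Pi.single_apply]
  rw [e, map_sum]
  refine (norm_sum_le _ _).trans ?_
  calc _ ≤ ∑ j : Fin d, ε * c := by
        apply Finset.sum_le_sum
        intro j _
        rw [map_smul, norm_smul, Real.norm_eq_abs]
        exact mul_le_mul (hε j) (hA j) (norm_nonneg _) ((abs_nonneg _).trans (hε j))
    _ = _ := by simp

lemma rip_unit {d k : ℕ} {W W' : Type*} [NormedAddCommGroup W] [InnerProductSpace ℝ W]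
    [NormedAddCommGroup W'] [InnerProductSpace ℝ W'] (hd : 300 ≤ d)
    (A : EuclideanSpace ℝ (Fin d) →ₗ[ℝ] W) (B : EuclideanSpace ℝ (Fin d) →ₗ[ℝ] W')
    (hnet : ∀ u ∈ gnet d (d ^ 3) k, 3 / 4 * ‖B (WithLp.toLp 2 u)‖ ^ 2 ≤ ‖A (WithLp.toLp 2 u)‖ ^ 2 ∧
      ‖A (WithLp.toLp 2 u)‖ ^ 2 ≤ 5 / 4 * ‖B (WithLp.toLp 2 u)‖ ^ 2)
    (hbas : ∀ j, ‖A (EuclideanSpace.single j 1)‖ ^ 2 ≤ 2 * ‖B (EuclideanSpace.single j 1)‖ ^ 2)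
    (m m' : ℝ) (hm : 0 < m) (hmm : m' ≤ d * m)
    (hlow : ∀ v, m * ‖v‖ ^ 2 ≤ ‖B v‖ ^ 2) (hup : ∀ v, ‖B v‖ ^ 2 ≤ m' * ‖v‖ ^ 2)
    (v : EuclideanSpace ℝ (Fin d)) (hv : spar v ≤ k) (hv1 : ‖v‖ = 1) :
    1 / 2 * ‖B v‖ ^ 2 ≤ ‖A v‖ ^ 2 ∧ ‖A v‖ ^ 2 ≤ 2 * ‖B v‖ ^ 2 := by
  obtain ⟨u, hu, hu2⟩ := gnet_cover d (d ^ 3) (by omega) (by positivity) k v (fun j => by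
    rw [← hv1]; exact PiLp.norm_apply_le v j) hv
  obtain ⟨n1, n2⟩ := hnet u hu
  set U : EuclideanSpace ℝ (Fin d) := WithLp.toLp 2 u with hU
  have hd' : (300 : ℝ) ≤ d := by exact_mod_cast hd
  have hd0 : (0 : ℝ) < d := by linarith
  have hB : ∀ j, ‖B (EuclideanSpace.single j 1)‖ ^ 2 ≤ d * m := by
    intro j
    have := hup (EuclideanSpace.single j 1)
    simp at this
    linarith
  have hBj : ∀ j, ‖B (EuclideanSpace.single j 1)‖ ≤ Real.sqrt (2 * (d * m)) := by
    intro j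
    apply Real.le_sqrt_of_sq_le
    have := hB j
    have : 0 < d * m := by positivity
    linarith
  have hAj : ∀ j, ‖A (EuclideanSpace.single j 1)‖ ≤ Real.sqrt (2 * (d * m)) := by
    intro j
    apply Real.le_sqrt_of_sq_le
    have := hB j
    have := hbas j
    linarith
  have hh : ∀ j, |(v - U) j| ≤ 1 / ((d ^ 3 : ℕ) : ℝ) := fun j => (hu2 j).1
  have a1 := lin_small A (v - U) _ _ hh hAj
  have b1 := lin_small B (v - U) _ _ hh hBj
  set b := ‖B v‖ with hb
  have hsmall : d * (1 / ((d ^ 3 : ℕ) : ℝ) * Real.sqrt (2 * (d * m))) ≤ 0.01 * b := by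
    apply abs_le_of_sq_le_sq' _ (by positivity) |>.2
    have hl := hlow v
    rw [hv1, ← hb] at hl
    rw [mul_pow, mul_pow, Real.sq_sqrt (by positivity)]
    have : (d : ℝ) ^ 2 * ((1 / ((d ^ 3 : ℕ) : ℝ)) ^ 2 * (2 * (d * m))) = 2 / d ^ 3 * m := by
      push_cast
      field_simp
    rw [this]
    have h3 : 2 / (d : ℝ) ^ 3 ≤ 0.0001 := by
      rw [div_le_iff₀ (by positivity)]
      have : (300 : ℝ) ^ 3 ≤ d ^ 3 := by gcongr
      linarith
    nlinarith
  have a2 := a1.trans hsmall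
  have b2 := b1.trans hsmall
  rw [map_sub] at a2 b2
  have t1 := norm_sub_norm_le (A v) (A U)
  have t2 := norm_sub_norm_le (A U) (A v)
  have t3 := norm_sub_norm_le (B v) (B U)
  have t4 := norm_sub_norm_le (B U) (B v)
  rw [norm_sub_rev] at t2 t4
  rw [← hb] at t3 t4
  have hb0 : 0 ≤ b := norm_nonneg _
  have l1 : 0.86 * ‖B U‖ ≤ ‖A U‖ := by
    apply abs_le_of_sq_le_sq' _ (norm_nonneg _) |>.2
    nlinarith [sq_nonneg ‖B U‖]
  have l2 : ‖A U‖ ≤ 1.12 * ‖B U‖ := by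
    apply abs_le_of_sq_le_sq' _ (by positivity) |>.2
    nlinarith [sq_nonneg ‖B U‖]
  have f1 : 0.8 * b ≤ ‖A v‖ := by linarith
  have f2 : ‖A v‖ ≤ 1.2 * b := by linarith
  constructor
  · have : (0.8 * b) ^ 2 ≤ ‖A v‖ ^ 2 := by gcongr
    nlinarith
  · have : ‖A v‖ ^ 2 ≤ (1.2 * b) ^ 2 := by gcongr
    nlinarith

lemma spar_smul {d : ℕ} (c : ℝ) (v : EuclideanSpace ℝ (Fin d)) : spar (c • v) ≤ spar v := by
  unfold spar
  apply Finset.card_le_card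
  intro i hi
  have h2 := (Finset.mem_filter.1 hi).2
  refine Finset.mem_filter.2 ⟨Finset.mem_univ _, fun h => h2 ?_⟩
  simp [h]

lemma rip_all {d k : ℕ} {W W' : Type*} [NormedAddCommGroup W] [InnerProductSpace ℝ W]
    [NormedAddCommGroup W'] [InnerProductSpace ℝ W'] (hd : 300 ≤ d)
    (A : EuclideanSpace ℝ (Fin d) →ₗ[ℝ] W) (B : EuclideanSpace ℝ (Fin d) →ₗ[ℝ] W')
    (hnet : ∀ u ∈ gnet d (d ^ 3) k, 3 / 4 * ‖B (WithLp.toLp 2 u)‖ ^ 2 ≤ ‖A (WithLp.toLp 2 u)‖ ^ 2 ∧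
      ‖A (WithLp.toLp 2 u)‖ ^ 2 ≤ 5 / 4 * ‖B (WithLp.toLp 2 u)‖ ^ 2)
    (hbas : ∀ j, ‖A (EuclideanSpace.single j 1)‖ ^ 2 ≤ 2 * ‖B (EuclideanSpace.single j 1)‖ ^ 2)
    (m m' : ℝ) (hm : 0 < m) (hmm : m' ≤ d * m)
    (hlow : ∀ v, m * ‖v‖ ^ 2 ≤ ‖B v‖ ^ 2) (hup : ∀ v, ‖B v‖ ^ 2 ≤ m' * ‖v‖ ^ 2)
    (v : EuclideanSpace ℝ (Fin d)) (hv : spar v ≤ k) :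
    1 / 2 * ‖B v‖ ^ 2 ≤ ‖A v‖ ^ 2 ∧ ‖A v‖ ^ 2 ≤ 2 * ‖B v‖ ^ 2 := by
  by_cases h : v = 0
  · subst h; simp
  have hn : 0 < ‖v‖ := norm_pos_iff.2 h
  obtain ⟨h1, h2⟩ := rip_unit hd A B hnet hbas m m' hm hmm hlow hup (‖v‖⁻¹ • v)
    ((spar_smul _ _).trans hv) (by rw [norm_smul]; simp [hn.ne'])
  rw [map_smul, map_smul, norm_smul, norm_smul, mul_pow, mul_pow] at h1 h2
  have hp : 0 < ‖‖v‖⁻¹‖ ^ 2 := by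
    rw [norm_inv, norm_norm]
    positivity
  constructor <;> nlinarith

lemma rayleigh {d : ℕ} (Sig : Matrix (Fin d) (Fin d) ℝ) (hS : Sig.IsHermitian)
    (v : EuclideanSpace ℝ (Fin d)) :
    ⟪v, Matrix.toEuclideanLin Sig v⟫ = ∑ i, hS.eigenvalues i * ⟪hS.eigenvectorBasis i, v⟫ ^ 2 := by
  rw [← hS.eigenvectorBasis.sum_inner_mul_inner v]
  apply Finset.sum_congr rfl
  intro i _
  have hsym := Matrix.isSymmetric_toEuclideanLin_iff.2 hS
  have : ⟪hS.eigenvectorBasis i, Matrix.toEuclideanLin Sig v⟫ =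
      hS.eigenvalues i * ⟪hS.eigenvectorBasis i, v⟫ := by
    rw [← hsym]
    have e : Matrix.toEuclideanLin Sig (hS.eigenvectorBasis i) =
        hS.eigenvalues i • hS.eigenvectorBasis i := by
      ext j
      have := congrFun (hS.mulVec_eigenvectorBasis i) j
      simpa [Matrix.toEuclideanLin_apply] using this
    rw [e, inner_smul_left]
    simp
  rw [this, real_inner_comm]
  ring

lemma sqrt_form {d : ℕ} (Sig : Matrix (Fin d) (Fin d) ℝ) (hS : Sig.PosDef)
    (v : EuclideanSpace ℝ (Fin d)) :
    ‖Matrix.toEuclideanLin (CFC.sqrt Sig) v‖ ^ 2 = ⟪v, Matrix.toEuclideanLin Sig v⟫ := by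
  have h0 : 0 ≤ Sig := hS.posSemidef.nonneg
  have hh : (CFC.sqrt Sig).IsHermitian :=
    (Matrix.nonneg_iff_posSemidef.1 (CFC.sqrt_nonneg Sig)).isHermitian
  have hsym := Matrix.isSymmetric_toEuclideanLin_iff.2 hh
  rw [← real_inner_self_eq_norm_sq, hsym]
  congr 1
  conv_rhs => rw [← CFC.sqrt_mul_sqrt_self Sig h0]
  ext j
  simp [Matrix.toEuclideanLin_apply, Matrix.mulVec_mulVec]

lemma form_bounds {d : ℕ} (hd : 0 < d) (Sig : Matrix (Fin d) (Fin d) ℝ) (hS : Sig.PosDef) :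
    0 < sInf (Set.range hS.isHermitian.eigenvalues) ∧
    (∀ v : EuclideanSpace ℝ (Fin d), sInf (Set.range hS.isHermitian.eigenvalues) * ‖v‖ ^ 2 ≤
      ‖Matrix.toEuclideanLin (CFC.sqrt Sig) v‖ ^ 2) ∧
    (∀ v : EuclideanSpace ℝ (Fin d), ‖Matrix.toEuclideanLin (CFC.sqrt Sig) v‖ ^ 2 ≤
      sSup (Set.range hS.isHermitian.eigenvalues) * ‖v‖ ^ 2) ∧
    (∀ j, ‖Matrix.toEuclideanLin (CFC.sqrt Sig) (EuclideanSpace.single j 1)‖ ^ 2 = Sig j j) := by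
  haveI : Nonempty (Fin d) := ⟨⟨0, hd⟩⟩
  have hfin := Set.finite_range hS.isHermitian.eigenvalues
  refine ⟨?_, ?_, ?_, ?_⟩
  · obtain ⟨i, hi⟩ := (Set.range_nonempty hS.isHermitian.eigenvalues).csInf_mem hfin
    rw [← hi]
    exact hS.eigenvalues_pos i
  · intro v
    rw [sqrt_form Sig hS, rayleigh Sig hS.isHermitian,
      ← hS.isHermitian.eigenvectorBasis.sum_sq_inner_right v, Finset.mul_sum]
    apply Finset.sum_le_sum
    intro i _
    gcongr
    exact csInf_le hfin.bddBelow ⟨i, rfl⟩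
  · intro v
    rw [sqrt_form Sig hS, rayleigh Sig hS.isHermitian,
      ← hS.isHermitian.eigenvectorBasis.sum_sq_inner_right v, Finset.mul_sum]
    apply Finset.sum_le_sum
    intro i _
    gcongr
    exact le_csSup hfin.bddAbove ⟨i, rfl⟩
  · intro j
    rw [sqrt_form Sig hS, EuclideanSpace.inner_single_left]
    simp [Matrix.toEuclideanLin_apply]

/-- Deviation event for one direction. -/
def evt (n d : ℕ) (v : Fin d → ℝ) (b t : ℝ) : Set ((Fin n → Fin d → ℝ) × (Fin n → ℝ)) :=
  {ω | n * t * (∑ j, v j ^ 2 + b ^ 2) <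
      |∑ i, (∑ j, ω.1 i j * v j + b * ω.2 i) ^ 2 - n * (∑ j, v j ^ 2 + b ^ 2)|}

lemma evt_union {n d : ℕ} {ι : Type*} (N : Finset ι) (v : ι → Fin d → ℝ) (b : ι → ℝ) (t : ℝ)
    (h0 : 0 ≤ t) (h1 : t ≤ 1) :
    (PP n d).real (⋃ u ∈ N, evt n d (v u) (b u) t) ≤ N.card * (2 * Real.exp (-(n * t ^ 2 / 8))) := by
  refine (measureReal_biUnion_finset_le _ _).trans ?_
  refine (Finset.sum_le_sum (fun u _ => row_tail (v u) (b u) t h0 h1)).trans ?_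
  simp

lemma bad_prob {n d s : ℕ} (hd : 300 ≤ d) (hs : 1 ≤ s) (hn : 6000 * s * Real.log d ≤ n)
    (N : Finset (Fin d → ℝ)) (hN : N.card ≤ (d * (2 * d ^ 3 + 1)) ^ (2 * s))
    (B : (Fin d → ℝ) → Fin d → ℝ) (V : Fin d → Fin d → ℝ) (c : Fin d → ℝ) (t : ℝ)
    (h0 : 0 ≤ t) (ht : n * t ^ 2 = 36 * Real.log d) :
    (PP n d).real ((⋃ u ∈ N, evt n d (B u) 0 (1 / 4)) ∪
      ((⋃ j ∈ (Finset.univ : Finset (Fin d)), evt n d (V j) 0 (1 / 4)) ∪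
      ((⋃ j ∈ (Finset.univ : Finset (Fin d)), evt n d (V j) (c j) t) ∪
      (⋃ j ∈ (Finset.univ : Finset (Fin d)), evt n d (V j) (- c j) t)))) ≤ 2 / d := by
  have hdR : (300 : ℝ) ≤ d := by exact_mod_cast hd
  have hd0 : (0 : ℝ) < d := by linarith
  have hsR : (1 : ℝ) ≤ s := by exact_mod_cast hs
  have hr : 0 < Real.log d := Real.log_pos (by linarith)
  have hnpos : (0 : ℝ) < n := lt_of_lt_of_le (by positivity) hn
  have h1 : t ≤ 1 := by
    by_contra hc
    push Not at hc
    have : n * 1 ≤ n * t ^ 2 := by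
      gcongr
      nlinarith
    nlinarith
  have e1 := evt_union (n := n) N B (fun _ => 0) (1 / 4) (by norm_num) (by norm_num)
  have e2 := evt_union (n := n) Finset.univ V (fun _ => 0) (1 / 4) (by norm_num) (by norm_num)
  have e3 := evt_union (n := n) Finset.univ V c t h0 h1
  have e4 := evt_union (n := n) Finset.univ V (fun j => - c j) t h0 h1
  rw [Finset.card_univ, Fintype.card_fin] at e2 e3 e4
  have x1 : Real.exp (-(n * (1 / 4) ^ 2 / 8)) ≤ ((d : ℝ) ^ (13 * s))⁻¹ := by
    have : ((d : ℝ) ^ (13 * s))⁻¹ = Real.exp (-((13 * s : ℕ) * Real.log d)) := by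
      rw [Real.exp_neg, Real.exp_nat_mul, Real.exp_log hd0]
    rw [this]
    apply Real.exp_le_exp.2
    push_cast
    nlinarith [mul_pos (by linarith : (0 : ℝ) < s) hr]
  have x2 : Real.exp (-(n * t ^ 2 / 8)) ≤ ((d : ℝ) ^ 4)⁻¹ := by
    have : ((d : ℝ) ^ 4)⁻¹ = Real.exp (-((4 : ℕ) * Real.log d)) := by
      rw [Real.exp_neg, Real.exp_nat_mul, Real.exp_log hd0]
    rw [this]
    apply Real.exp_le_exp.2
    push_cast
    rw [ht]
    linarith
  have hN' : (N.card : ℝ) ≤ (d : ℝ) ^ (10 * s) := by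
    have a : N.card ≤ d ^ (10 * s) := by
      refine hN.trans ?_
      have : d * (2 * d ^ 3 + 1) ≤ d ^ 5 := by
        have h3 : 1 ≤ d ^ 3 := Nat.one_le_pow _ _ (by omega)
        calc d * (2 * d ^ 3 + 1) ≤ d * (d * d ^ 3) := by
              gcongr
              nlinarith
          _ = d ^ 5 := by ring
      calc _ ≤ (d ^ 5) ^ (2 * s) := Nat.pow_le_pow_left this _
        _ = _ := by rw [← pow_mul]; congr 1; ring
    exact_mod_cast a
  have hdle : (d : ℝ) ≤ (d : ℝ) ^ (10 * s) := le_self_pow₀ (by linarith) (by omega)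
  have y1 : ((N.card : ℝ) + d) * (2 * Real.exp (-(n * (1 / 4) ^ 2 / 8))) ≤ 1 / d := by
    calc _ ≤ ((d : ℝ) ^ (10 * s) + (d : ℝ) ^ (10 * s)) * (2 * ((d : ℝ) ^ (13 * s))⁻¹) := by
          gcongr
      _ = 4 / (d : ℝ) ^ (3 * s) := by
          have : (d : ℝ) ^ (13 * s) = (d : ℝ) ^ (10 * s) * (d : ℝ) ^ (3 * s) := by
            rw [← pow_add]; congr 1; ring
          rw [this]
          field_simp
          norm_num
      _ ≤ 4 / (d : ℝ) ^ 3 := by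
          gcongr
          · linarith
          · omega
      _ ≤ 1 / d := by
          rw [div_le_div_iff₀ (by positivity) (by positivity)]
          nlinarith [mul_pos hd0 hd0]
  have y2 : (d : ℝ) * (2 * Real.exp (-(n * t ^ 2 / 8))) + d * (2 * Real.exp (-(n * t ^ 2 / 8)))
      ≤ 1 / d := by
    calc _ ≤ (d : ℝ) * (2 * ((d : ℝ) ^ 4)⁻¹) + d * (2 * ((d : ℝ) ^ 4)⁻¹) := by gcongr
      _ = 4 / (d : ℝ) ^ 3 := by field_simp; norm_num
      _ ≤ 1 / d := by
          rw [div_le_div_iff₀ (by positivity) (by positivity)]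
          nlinarith [mul_pos hd0 hd0]
  have u1 := measureReal_union_le (μ := PP n d) (⋃ j ∈ (Finset.univ : Finset (Fin d)), evt n d (V j) (c j) t)
      (⋃ j ∈ (Finset.univ : Finset (Fin d)), evt n d (V j) (- c j) t)
  refine (measureReal_union_le _ _).trans ?_
  refine (add_le_add e1 ((measureReal_union_le _ _).trans (add_le_add e2
    (u1.trans (add_le_add e3 e4))))).trans ?_
  have : (2 : ℝ) / d = 1 / d + 1 / d := by ring
  rw [this]
  linarith

lemma evt_not {n d : ℕ} (Sig : Matrix (Fin d) (Fin d) ℝ)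
    (ω : (Fin n → Fin d → ℝ) × (Fin n → ℝ)) (v : EuclideanSpace ℝ (Fin d)) (b t : ℝ)
    (h : ω ∉ evt n d (fun j => (Matrix.toEuclideanLin (CFC.sqrt Sig) v) j) b t) :
    |‖Matrix.toEuclideanLin (Matrix.of ω.1 * CFC.sqrt Sig) v + b • WithLp.toLp 2 ω.2‖ ^ 2
      - n * (‖Matrix.toEuclideanLin (CFC.sqrt Sig) v‖ ^ 2 + b ^ 2)| ≤
      n * t * (‖Matrix.toEuclideanLin (CFC.sqrt Sig) v‖ ^ 2 + b ^ 2) := by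
  have h1 : ∑ i, (∑ j, ω.1 i j * (Matrix.toEuclideanLin (CFC.sqrt Sig) v) j + b * ω.2 i) ^ 2 =
      ‖Matrix.toEuclideanLin (Matrix.of ω.1 * CFC.sqrt Sig) v + b • WithLp.toLp 2 ω.2‖ ^ 2 := by
    rw [norm_sq_eq_sum]
    apply Finset.sum_congr rfl
    intro i _
    congr 1
    simp only [Matrix.toLpLin_apply, PiLp.add_apply, PiLp.smul_apply, smul_eq_mul,
      ← Matrix.mulVec_mulVec]
    simp [Matrix.mulVec, dotProduct]
  unfold evt at h
  rw [Set.mem_setOf_eq, not_lt, h1, ← norm_sq_eq_sum] at h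
  exact h

lemma noise_bound {W : Type*} [NormedAddCommGroup W] [InnerProductSpace ℝ W] (a w : W)
    (n c t q : ℝ) (hn : 0 < n) (hc : 0 < c) (hq : q = c ^ 2)
    (h1 : |‖a + c • w‖ ^ 2 - n * (q + c ^ 2)| ≤ n * t * (q + c ^ 2))
    (h2 : |‖a + (-c) • w‖ ^ 2 - n * (q + (-c) ^ 2)| ≤ n * t * (q + (-c) ^ 2)) :
    |1 / n * ⟪w, a⟫| ≤ t * c := by
  subst hq
  rw [neg_smul, ← sub_eq_add_neg] at h2
  have e1 := norm_add_sq_real a (c • w)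
  have e2 := norm_sub_sq_real a (c • w)
  rw [real_inner_smul_right, real_inner_comm] at e1 e2
  rw [abs_le] at h1 h2
  have k1 : c * ⟪w, a⟫ ≤ c * (n * (t * c)) := by nlinarith
  have k2 : c * (-(n * (t * c))) ≤ c * ⟪w, a⟫ := by nlinarith
  have k1' := le_of_mul_le_mul_left k1 hc
  have k2' := le_of_mul_le_mul_left k2 hc
  have e3 : 1 / n * ⟪w, a⟫ = ⟪w, a⟫ / n := by ring
  rw [e3, abs_le]
  constructor
  · rw [le_div_iff₀ hn]; linarith
  · rw [div_le_iff₀ hn]; linarith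

lemma rip_good {n d s : ℕ} (hd : 300 ≤ d) (hn : 0 < n) (Sig : Matrix (Fin d) (Fin d) ℝ)
    (hS : Sig.PosDef)
    (hmm : sSup (Set.range hS.isHermitian.eigenvalues) ≤
      d * sInf (Set.range hS.isHermitian.eigenvalues))
    (ω : (Fin n → Fin d → ℝ) × (Fin n → ℝ))
    (h1 : ∀ u ∈ gnet d (d ^ 3) (2 * s), ω ∉ evt n d
      (fun j => (Matrix.toEuclideanLin (CFC.sqrt Sig) (WithLp.toLp 2 u)) j) 0 (1 / 4))
    (h2 : ∀ i, ω ∉ evt n d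
      (fun j => (Matrix.toEuclideanLin (CFC.sqrt Sig) (EuclideanSpace.single i 1)) j) 0 (1 / 4))
    (v : EuclideanSpace ℝ (Fin d)) (hv : spar v ≤ 2 * s) :
    1 / 2 * sInf (Set.range hS.isHermitian.eigenvalues) * ‖v‖ ^ 2 ≤
      1 / (n : ℝ) * ‖Matrix.toEuclideanLin (Matrix.of ω.1 * CFC.sqrt Sig) v‖ ^ 2 ∧
    1 / (n : ℝ) * ‖Matrix.toEuclideanLin (Matrix.of ω.1 * CFC.sqrt Sig) v‖ ^ 2 ≤
      2 * sSup (Set.range hS.isHermitian.eigenvalues) * ‖v‖ ^ 2 := by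
  obtain ⟨m0, mlow, mup, -⟩ := form_bounds (by omega) Sig hS
  have hn' : (0 : ℝ) < n := by exact_mod_cast hn
  set B := Matrix.toEuclideanLin (CFC.sqrt Sig) with hB
  set X := Matrix.toEuclideanLin (Matrix.of ω.1 * CFC.sqrt Sig) with hX
  set A : EuclideanSpace ℝ (Fin d) →ₗ[ℝ] EuclideanSpace ℝ (Fin n) :=
    (Real.sqrt n)⁻¹ • X with hA
  have hAn : ∀ u, ‖A u‖ ^ 2 = 1 / (n : ℝ) * ‖X u‖ ^ 2 := by
    intro u
    rw [hA, LinearMap.smul_apply, norm_smul, mul_pow, norm_inv, Real.norm_eq_abs, inv_pow, sq_abs,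
      Real.sq_sqrt hn'.le, one_div]
  have key : ∀ u, ω ∉ evt n d (fun j => (B u) j) 0 (1 / 4) →
      3 / 4 * ‖B u‖ ^ 2 ≤ ‖A u‖ ^ 2 ∧ ‖A u‖ ^ 2 ≤ 5 / 4 * ‖B u‖ ^ 2 := by
    intro u hu
    have := evt_not Sig ω u 0 (1 / 4) hu
    rw [zero_smul, add_zero, ← hX, ← hB, abs_le] at this
    have e3 : ‖A u‖ ^ 2 = ‖X u‖ ^ 2 / n := by rw [hAn]; ring
    rw [e3, le_div_iff₀ hn', div_le_iff₀ hn']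
    constructor <;> nlinarith
  obtain ⟨r1, r2⟩ := rip_all hd A B (fun u hu => key _ (h1 u hu))
    (fun j => ((key _ (h2 j)).2).trans (by nlinarith [sq_nonneg ‖B (EuclideanSpace.single j 1)‖]))
    _ _ m0 hmm mlow mup v hv
  rw [hAn] at r1 r2
  have := mlow v
  have := mup v
  constructor <;> linarith


/-- Corollary 3 for sparse linear regression with random Gaussian design: with probability at
least `1 - e^{-c₀n} - 2/d`, Sparse Polyak with reciprocal thresholding contracts linearly up to
the statistical precision and then remains trapped there.  The design `X` has i.i.d. `N(0,Σ)`
rows (realized as `Z·Σ^{1/2}` for a standard Gaussian matrix `Z`) and the noise is `N(0,σ²Iₙ)`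
(realized as `σ·z` for a standard Gaussian vector `z`). -/
theorem statement14 :
    ∃ c₀ c₁ : ℝ, 0 < c₀ ∧ 0 < c₁ ∧
      ∀ (n d sstar s : ℕ), 1 ≤ sstar → sstar < s → s < d →
      ∀ (Sig : Matrix (Fin d) (Fin d) ℝ) (hSig : Sig.PosDef)
        (θstar : EuclideanSpace ℝ (Fin d)), spar θstar ≤ sstar →
      ∀ σ : ℝ, 0 < σ →
      ∀ (HT RT : EuclideanSpace ℝ (Fin d) → EuclideanSpace ℝ (Fin d)),
        IsHT d s HT → IsRT d s RT →
      ∀ θ0 : EuclideanSpace ℝ (Fin d), spar θ0 ≤ s →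
      ∀ L μ ζ τ μbar κ C R : ℝ,
        L = 2 * sSup (Set.range hSig.isHermitian.eigenvalues) →
        μ = sInf (Set.range hSig.isHermitian.eigenvalues) / 2 →
        ζ = sSup (Set.range fun i => Sig i i) →
        τ = c₁ * ζ * Real.log d / n →
        μbar = μ - 3 * τ * s →
        κ = (L + 3 * τ * s) / μbar →
        C = 2 * Real.sqrt ζ →
        R = 288 * C ^ 2 * σ ^ 2 * s * Real.log d / (n * μbar ^ 2) →
        0 < μbar → 1 ≤ κ → (s : ℝ) ≥ 320 * κ * sstar →
        1 - Real.exp (-(c₀ * n)) - 2 / d ≤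
          (((Measure.pi fun _ : Fin n => Measure.pi fun _ : Fin d =>
                gaussianReal 0 1).prod
              (Measure.pi fun _ : Fin n => gaussianReal 0 1))
            {ω : (Fin n → Fin d → ℝ) × (Fin n → ℝ) |
              ∀ (X : Matrix (Fin n) (Fin d) ℝ), X = Matrix.of ω.1 * CFC.sqrt Sig →
              ∀ y : Fin n → ℝ,
                y = X.mulVec (WithLp.equiv 2 (Fin d → ℝ) θstar) + σ • ω.2 →
              ∀ f : EuclideanSpace ℝ (Fin d) → ℝ,
                f = (fun θ => 1 / (2 * (n : ℝ)) *
                  ‖(WithLp.equiv 2 (Fin n → ℝ)).symm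
                    (y - X.mulVec (WithLp.equiv 2 (Fin d → ℝ) θ))‖ ^ 2) →
              ∀ θ : ℕ → EuclideanSpace ℝ (Fin d), θ 0 = θ0 →
                (∀ t, θ (t + 1) =
                  RT (θ t - (max (f (θ t) - f θstar) 0 /
                    (5 * ‖HT (gradient f (θ t))‖ ^ 2)) • gradient f (θ t))) →
                (∀ t, ‖θ t - θstar‖ ^ 2 ≥ R →
                  ‖θ (t + 1) - θstar‖ ^ 2 ≤ (1 - 1 / (80 * κ)) * ‖θ t - θstar‖ ^ 2) ∧
                (∀ T, ‖θ T - θstar‖ ^ 2 < R →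
                  ∀ t, T ≤ t → ‖θ t - θstar‖ ^ 2 ≤ (1 + 1 / (80 * κ)) * R)}).toReal := by
  refine ⟨1, 1000, one_pos, by norm_num, ?_⟩
  intro n d sstar s hk hks hsd Sig hSig θstar hstar σ hσ HT RT hHT hRT θ0 hθ0 L μ ζ τ μbar κ C R
    hL hμ hζ hτ hμbar hκ hC hR hμ0 hκ1 hsk
  rcases Nat.eq_zero_or_pos n with hn0 | hn
  · subst hn0
    refine le_trans ?_ ENNReal.toReal_nonneg
    have : (0 : ℝ) ≤ 2 / d := by positivity
    simp [this]
  have hnR : (0 : ℝ) < n := by exact_mod_cast hn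
  have hkR : (1 : ℝ) ≤ sstar := by exact_mod_cast hk
  have hs320 : (320 : ℝ) ≤ s := by nlinarith
  have hs320' : 320 ≤ s := by exact_mod_cast hs320
  have hd300 : 300 ≤ d := by omega
  have hdR : (s : ℝ) ≤ d := by exact_mod_cast hsd.le
  have hr : 0 < Real.log d := Real.log_pos (by linarith)
  obtain ⟨m0, mlow, mup, mdiag⟩ := form_bounds (by omega) Sig hSig
  set m := sInf (Set.range hSig.isHermitian.eigenvalues) with hm
  set m' := sSup (Set.range hSig.isHermitian.eigenvalues) with hm'
  set B := Matrix.toEuclideanLin (CFC.sqrt Sig) with hB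
  have hζj : ∀ j, Sig j j ≤ ζ := by
    intro j
    rw [hζ]
    exact le_csSup (Set.finite_range _).bddAbove ⟨j, rfl⟩
  have hmj : ∀ j, m ≤ Sig j j := by
    intro j
    have := mlow (EuclideanSpace.single j 1)
    rw [mdiag] at this
    simpa using this
  have hζm : m ≤ ζ := (hmj ⟨0, by omega⟩).trans (hζj ⟨0, by omega⟩)
  have hζ0 : 0 < ζ := lt_of_lt_of_le m0 hζm
  have hτ0 : 0 ≤ τ := by rw [hτ]; positivity
  have hτs : 0 ≤ 3 * τ * s := by positivity
  have hn6 : 6000 * s * Real.log d ≤ n := by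
    have h1 : 3 * τ * s ≤ ζ / 2 := by linarith
    have h2 : 3 * τ * s = ζ * (3000 * s * Real.log d / n) := by rw [hτ]; ring
    rw [h2] at h1
    have h3 : ζ * (3000 * s * Real.log d / n) ≤ ζ * (1 / 2) := by linarith
    have h4 := le_of_mul_le_mul_left h3 hζ0
    rw [div_le_iff₀ hnR] at h4
    linarith
  have hLκ : L + 3 * τ * s = κ * μbar := by rw [hκ]; field_simp
  have hκs : κ ≤ s := by nlinarith
  have hmm : m' ≤ d * m := by
    have h1 : κ * μbar ≤ d * m := by
      apply mul_le_mul (hκs.trans hdR) (by linarith) hμ0.le (by positivity)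
    have h2 : 0 ≤ m' := by
      have h3 := mup (EuclideanSpace.single ⟨0, by omega⟩ 1)
      rw [mdiag] at h3
      have h4 := hmj ⟨0, by omega⟩
      simp at h3
      linarith
    linarith
  set t := 6 * Real.sqrt (Real.log d / n) with ht
  have ht0 : 0 ≤ t := by positivity
  have ht2 : n * t ^ 2 = 36 * Real.log d := by
    rw [ht, mul_pow, Real.sq_sqrt (by positivity)]
    field_simp
    norm_num
  have hbad := bad_prob (n := n) hd300 (by omega : 1 ≤ s) hn6 (gnet d (d ^ 3) (2 * s))
    (gnet_card d (d ^ 3) (2 * s)) (fun u j => (B (WithLp.toLp 2 u)) j)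
    (fun i j => (B (EuclideanSpace.single i 1)) j)
    (fun i => ‖B (EuclideanSpace.single i 1)‖) t ht0 ht2
  set bad := ((⋃ u ∈ gnet d (d ^ 3) (2 * s),
      evt n d (fun j => (B (WithLp.toLp 2 u)) j) 0 (1 / 4)) ∪
      ((⋃ i ∈ (Finset.univ : Finset (Fin d)),
        evt n d (fun j => (B (EuclideanSpace.single i 1)) j) 0 (1 / 4)) ∪
      ((⋃ i ∈ (Finset.univ : Finset (Fin d)), evt n d
        (fun j => (B (EuclideanSpace.single i 1)) j) ‖B (EuclideanSpace.single i 1)‖ t) ∪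
      (⋃ i ∈ (Finset.univ : Finset (Fin d)), evt n d
        (fun j => (B (EuclideanSpace.single i 1)) j) (-‖B (EuclideanSpace.single i 1)‖) t))))
    with hbaddef
  change _ ≤ (PP n d).real _
  have hbase : 1 - 2 / (d : ℝ) ≤ (PP n d).real badᶜ := by
    have h1 := measureReal_union_le (μ := PP n d) bad badᶜ
    rw [Set.union_compl_self, probReal_univ] at h1
    linarith
  refine le_trans (by linarith [Real.exp_pos (-(1 * (n : ℝ)))]) (hbase.trans ?_)
  refine measureReal_mono ?_
  intro ω hω
  rw [hbaddef] at hω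
  simp only [Set.mem_compl_iff, Set.mem_union, Set.mem_iUnion, not_or, not_exists] at hω
  obtain ⟨w1, w2, w3, w4⟩ := hω
  intro X hX y hy f hf θ hθ hrec
  have hR0 : 0 < R := by
    rw [hR, hC]
    have : 0 < Real.sqrt ζ := Real.sqrt_pos.2 hζ0
    positivity
  refine det_main hHT hRT hk hks hsd (Matrix.toEuclideanLin X).toContinuousLinearMap
    (σ • WithLp.toLp 2 ω.2) n hnR θstar hstar f ?_ μbar (L + 3 * τ * s) κ
    (σ * (t * Real.sqrt ζ)) R hμ0 hκ hκ1 hsk hR0 ?_ ?_ ?_ θ (hθ ▸ hθ0) hrec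
  · rw [hf, hy]
    rfl
  · have q1 := Real.sq_sqrt hζ0.le
    have q2 := Real.sq_sqrt (by positivity : 0 ≤ Real.log d / n)
    rw [hR, hC, ht]
    simp only [mul_pow]
    rw [q1, q2]
    apply le_of_eq
    field_simp
    norm_num
  · intro u hu
    obtain ⟨r1, r2⟩ := rip_good hd300 hn Sig hSig hmm ω w1
      (fun i => w2 i (Finset.mem_univ i)) u hu
    rw [← hX] at r1 r2
    simp only [LinearMap.coe_toContinuousLinearMap']
    refine ⟨le_trans ?_ r1, r2.trans ?_⟩
    · gcongr
      linarith
    · gcongr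
      linarith
  · intro i
    simp only [LinearMap.coe_toContinuousLinearMap']
    have hc : 0 < ‖B (EuclideanSpace.single i 1)‖ := by
      have h5 := mdiag i
      have h6 := hmj i
      rcases (norm_nonneg (B (EuclideanSpace.single i 1))).eq_or_lt with h7 | h7
      · rw [← h7] at h5
        norm_num at h5
        linarith
      · exact h7
    have h8 := noise_bound _ _ n _ t _ hnR hc rfl
      (evt_not Sig ω _ _ _ (w3 i (Finset.mem_univ i)))
      (evt_not Sig ω _ _ _ (w4 i (Finset.mem_univ i)))
    have h9 : ‖B (EuclideanSpace.single i 1)‖ ≤ Real.sqrt ζ := by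
      apply Real.le_sqrt_of_sq_le
      rw [mdiag]
      exact hζj i
    rw [real_inner_smul_left, mul_left_comm, abs_mul, abs_of_pos hσ, hX]
    gcongr
    exact h8.trans (by gcongr)
end
end
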